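/- For every ε > 0 there exists L > 0 with the following property. Let X and Y be independent finitely supported random variables taking values in G = 𝔽₂ⁿ. Then there exists a subspace V ⊆ G with H[𝐔_V] ≤ L (H[X] + H[Y]) such that H[X + 𝐔_V] − H[𝐔_V] ≤ H[X + Y] − H[Y] + ε (H[X] + H[Y]), where 𝐔_V is taken independent of X. -/

import Mathlib

open Real Pointwise

noncomputable section

abbrev Fvec (n : ℕ) : Type := Fin n → ZMod 2

/-- Shannon entropy (natural log) of a finitely supported distribution. -/
def ent {A : Type*} (p : A → ℝ) : ℝ := ∑ᶠ a, Real.negMulLog (p a)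

/-- `p` is a (finitely supported) probability distribution. -/
def IsDist {A : Type*} (p : A → ℝ) : Prop := (∀ a, 0 ≤ p a) ∧ ∑ᶠ a, p a = 1

/-- Pushforward of a distribution along a map: the distribution of `f(X)` for `X ∼ p`. -/
def push {A B : Type*} (f : A → B) (p : A → ℝ) : B → ℝ := fun b => ∑ᶠ a ∈ f ⁻¹' {b}, p a

/-- Joint distribution of a pair of independent random variables. -/
def prodDist {A B : Type*} (p : A → ℝ) (q : B → ℝ) : A × B → ℝ := fun z => p z.1 * q z.2

/-- Distribution of `X + Y` for independent `X ∼ p`, `Y ∼ q`. -/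
def conv {A : Type*} [AddGroup A] (p q : A → ℝ) : A → ℝ := fun z => ∑ᶠ x, p x * q (z - x)

/-- The distribution of `X` conditioned on `U = b`, where `r` is the joint distribution of `(X, U)`. -/
def fiber {A B : Type*} (r : A × B → ℝ) (b : B) : A → ℝ := fun a => r (a, b) / push Prod.snd r b

/-- Conditional entropy `H[X | U]` of a joint distribution `r` of `(X, U)`. -/
def condEnt {A B : Type*} (r : A × B → ℝ) : ℝ := ∑ᶠ b, push Prod.snd r b * ent (fiber r b)

/-- Doubling mass `s[X ; Y]` (of independent copies with distributions `p`, `q`). -/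
def sDouble {A : Type*} [AddGroup A] (p q : A → ℝ) : ℝ := ent p + ent q - ent (conv p q)

/-- Conditional doubling mass `s[X | U ; Y | W] = 𝔼_{u ∼ U, w ∼ W} s[X_u ; Y_w]`,
where `r1`, `r2` are the joint distributions of `(X, U)` and `(Y, W)`. -/
def sCond {A U W : Type*} [AddGroup A] (r1 : A × U → ℝ) (r2 : A × W → ℝ) : ℝ :=
  ∑ᶠ u, ∑ᶠ w, push Prod.snd r1 u * push Prod.snd r2 w * sDouble (fiber r1 u) (fiber r2 w)

/-- Conditional mutual information `I[A : B | S]` of a joint distribution of `(A, B, S)`. -/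
def condMI {A B S : Type*} (r : A × B × S → ℝ) : ℝ :=
  ent (push (fun z => (z.1, z.2.2)) r) + ent (push (fun z => z.2) r)
    - ent r - ent (push (fun z => z.2.2) r)

/-- Uniform distribution on a set. -/
def unifOn {A : Type*} (s : Set A) : A → ℝ := s.indicator fun _ => (Nat.card s : ℝ)⁻¹

/-- Entropic Ruzsa distance `d[X ; Y]`. -/
def dRuzsa {A : Type*} [AddGroup A] (p q : A → ℝ) : ℝ := ent (conv p q) - ent p / 2 - ent q / 2

/-- Joint distribution of `(X, X + Y)` for independent `X ∼ p`, `Y ∼ q`. -/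
def jointSum {A : Type*} [AddGroup A] (p q : A → ℝ) : A × A → ℝ :=
  push (fun z : A × A => (z.1, z.1 + z.2)) (prodDist p q)

/-- Joint distribution of `(X, π_V(X))`. -/
def selfProj {n : ℕ} (V : Submodule (ZMod 2) (Fvec n)) (p : Fvec n → ℝ) :
    Fvec n × (Fvec n ⧸ V) → ℝ := push (fun x => (x, V.mkQ x)) p

/-- Joint distribution of independent `(X₁, X₂, Y₁, Y₂)` with `X₁, X₂ ∼ p` and `Y₁, Y₂ ∼ q`. -/
def quad {A : Type*} (p q : A → ℝ) : A × A × A × A → ℝ :=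
  fun z => p z.1 * p z.2.1 * q z.2.2.1 * q z.2.2.2

/-- Distribution of `X₁ + ⋯ + X_k` for independent `Xᵢ ∼ p i`. -/
def indepSum {A : Type*} [AddCommGroup A] (k : ℕ) (p : Fin k → A → ℝ) : A → ℝ :=
  push (fun x : Fin k → A => ∑ i, x i) (fun x => ∏ i, p i (x i))

/-- Statement `A(η, L, c)` from the paper. -/
def StA (η L c : ℝ) : Prop :=
  ∀ (n : ℕ) (p q : Fvec n → ℝ), IsDist p → IsDist q →
    ent (conv p q) ≤ (1 - η) * (ent p + ent q) →
    ∃ V : Submodule (ZMod 2) (Fvec n),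
      ent (unifOn (V : Set (Fvec n))) ≤ L * (ent p + ent q) ∧
      ent (push V.mkQ p) + ent (push V.mkQ q) ≤ (1 - c) * (ent p + ent q)

/-- Statement `B(η, ε, L)` from the paper. -/
def StB (η ε L : ℝ) : Prop :=
  ∀ (n : ℕ) (p q : Fvec n → ℝ), IsDist p → IsDist q →
    ∃ V : Submodule (ZMod 2) (Fvec n),
      ent (unifOn (V : Set (Fvec n))) ≤ L * (ent p + ent q) ∧
      ent (conv (push V.mkQ p) (push V.mkQ q)) ≥
        (1 - η) * (ent (push V.mkQ p) + ent (push V.mkQ q)) - ε * (ent p + ent q)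


/-! ## Entropy of functions on a finite weighted space -/

section Entropy
open scoped Classical

/-- a probability weight on a finite type -/
def IsP {Ω : Type} [Fintype Ω] (P : Ω → ℝ) : Prop := (∀ ω, 0 ≤ P ω) ∧ ∑ ω, P ω = 1

/-- the probability that `f` takes the value it has at `ω` -/
def prb {Ω A : Type} [Fintype Ω] (P : Ω → ℝ) (f : Ω → A) (ω : Ω) : ℝ :=
  ∑ ω', if f ω' = f ω then P ω' else 0

/-- Shannon entropy of `f` -/
def HH {Ω A : Type} [Fintype Ω] (P : Ω → ℝ) (f : Ω → A) : ℝ :=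
  - ∑ ω, P ω * Real.log (prb P f ω)

variable {Ω A B C D : Type} [Fintype Ω] {P : Ω → ℝ}

lemma prb_nonneg (hP : IsP P) (f : Ω → A) (ω : Ω) : 0 ≤ prb P f ω :=
  Finset.sum_nonneg fun i _ => by split_ifs; exacts [hP.1 i, le_rfl]

lemma le_prb (hP : IsP P) (f : Ω → A) (ω : Ω) : P ω ≤ prb P f ω := by
  have := Finset.single_le_sum (f := fun ω' => if f ω' = f ω then P ω' else 0)
    (fun i _ => by split_ifs; exacts [hP.1 i, le_rfl]) (Finset.mem_univ ω)
  simpa [prb] using this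

lemma prb_le_one (hP : IsP P) (f : Ω → A) (ω : Ω) : prb P f ω ≤ 1 := by
  rw [← hP.2]
  exact Finset.sum_le_sum fun i _ => by split_ifs; exacts [le_rfl, hP.1 i]

lemma prb_mono (hP : IsP P) {f : Ω → A} {g : Ω → B} (h : ∀ x y, f x = f y → g x = g y) (ω : Ω) :
    prb P f ω ≤ prb P g ω := by
  refine Finset.sum_le_sum fun i _ => ?_
  by_cases h1 : f i = f ω
  · simp [h1, h _ _ h1]
  · simp only [h1, if_false]; split_ifs; exacts [hP.1 i, le_rfl]

lemma HH_nonneg (hP : IsP P) (f : Ω → A) : 0 ≤ HH P f := by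
  unfold HH
  rw [neg_nonneg]
  refine Finset.sum_nonpos fun i _ => mul_nonpos_of_nonneg_of_nonpos (hP.1 i) ?_
  exact Real.log_nonpos (prb_nonneg hP f i) (prb_le_one hP f i)

lemma HH_mono (hP : IsP P) {f : Ω → A} {g : Ω → B} (h : ∀ x y, f x = f y → g x = g y) :
    HH P g ≤ HH P f := by
  unfold HH
  refine neg_le_neg (Finset.sum_le_sum fun i _ => ?_)
  rcases (hP.1 i).eq_or_lt with h0 | h0
  · simp [← h0]
  · exact mul_le_mul_of_nonneg_left
      (Real.log_le_log (h0.trans_le (le_prb hP f i)) (prb_mono hP h i)) h0.le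

lemma HH_congr (hP : IsP P) {f : Ω → A} {g : Ω → B} (h : ∀ x y, f x = f y ↔ g x = g y) :
    HH P f = HH P g :=
  le_antisymm (HH_mono hP fun x y => (h x y).2) (HH_mono hP fun x y => (h x y).1)

lemma gibbs (hP : IsP P) (R : Ω → ℝ) (c : ℝ) (hc : 0 < c) (hR : ∀ ω, 0 < P ω → 0 < R ω)
    (hs : ∑ ω, P ω * R ω ≤ c) : ∑ ω, P ω * Real.log (R ω) ≤ Real.log c := by
  have h1 : ∀ ω, P ω * Real.log (R ω) ≤ P ω * (R ω / c - 1 + Real.log c) := by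
    intro ω
    rcases (hP.1 ω).eq_or_lt with h0 | h0
    · simp [← h0]
    · refine mul_le_mul_of_nonneg_left ?_ h0.le
      have := Real.log_le_sub_one_of_pos (div_pos (hR ω h0) hc)
      rw [Real.log_div (hR ω h0).ne' hc.ne'] at this
      linarith
  refine (Finset.sum_le_sum fun ω _ => h1 ω).trans ?_
  have : ∑ ω, P ω * (R ω / c - 1 + Real.log c)
      = (∑ ω, P ω * R ω) / c + (∑ ω, P ω) * (Real.log c - 1) := by
    rw [Finset.sum_div, Finset.sum_mul, ← Finset.sum_add_distrib]
    exact Finset.sum_congr rfl fun ω _ => by ring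
  rw [this, hP.2]
  have : (∑ ω, P ω * R ω) / c ≤ 1 := (div_le_one hc).2 hs
  linarith

/-- key counting bound: `∑ P ω g ω / prb f ω` over a class -/
lemma sum_div_prb (f : Ω → A) (ω₀ : Ω) :
    ∑ ω, (if f ω = f ω₀ then P ω / prb P f ω else 0) ≤ 1 := by
  have : ∑ ω, (if f ω = f ω₀ then P ω / prb P f ω else 0) = prb P f ω₀ / prb P f ω₀ := by
    rw [prb, Finset.sum_div]
    refine Finset.sum_congr rfl fun ω _ => ?_
    by_cases h : f ω = f ω₀
    · simp [h, prb]
    · simp [h]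
  rw [this]
  exact div_self_le_one _

lemma HH_submod (hP : IsP P) {f : Ω → A} {g : Ω → B} {h : Ω → C} {k : Ω → D}
    (hf : ∀ x y, f x = f y → h x = h y) (hg : ∀ x y, g x = g y → h x = h y)
    (hk : ∀ x y, f x = f y → g x = g y → k x = k y) :
    HH P k + HH P h ≤ HH P f + HH P g := by
  -- replace k by (f,g)
  have hk' : HH P k ≤ HH P (fun ω => (f ω, g ω)) :=
    HH_mono hP fun x y e => hk x y (Prod.ext_iff.1 e).1 (Prod.ext_iff.1 e).2
  refine (add_le_add_left hk' _).trans ?_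
  set fg := fun ω => (f ω, g ω) with hfg
  have key := gibbs hP (fun ω => prb P f ω * prb P g ω / (prb P fg ω * prb P h ω)) 1 one_pos
    (fun ω h0 => by
      have h1 := h0.trans_le (le_prb hP f ω)
      have h2 := h0.trans_le (le_prb hP g ω)
      have h3 := h0.trans_le (le_prb hP h ω)
      have h4 := h0.trans_le (le_prb hP fg ω)
      positivity) ?_
  · rw [Real.log_one] at key
    have e : ∑ ω, P ω * Real.log (prb P f ω * prb P g ω / (prb P fg ω * prb P h ω))
      = ∑ ω, (P ω * Real.log (prb P f ω) + P ω * Real.log (prb P g ω)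
        - P ω * Real.log (prb P fg ω) - P ω * Real.log (prb P h ω)) := by
      refine Finset.sum_congr rfl fun ω _ => ?_
      rcases (hP.1 ω).eq_or_lt with h0 | h0
      · simp [← h0]
      · have h1 := (h0.trans_le (le_prb hP f ω)).ne'
        have h2 := (h0.trans_le (le_prb hP g ω)).ne'
        have h3 := (h0.trans_le (le_prb hP h ω)).ne'
        have h4 := (h0.trans_le (le_prb hP fg ω)).ne'
        rw [Real.log_div (mul_ne_zero h1 h2) (mul_ne_zero h4 h3), Real.log_mul h1 h2,
          Real.log_mul h4 h3]
        ring
    rw [e, Finset.sum_sub_distrib, Finset.sum_sub_distrib, Finset.sum_add_distrib] at key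
    unfold HH
    linarith
  · -- the sum is at most one
    have nn : ∀ {E : Type} (f : Ω → E) ω, 0 ≤ prb P f ω := fun f ω => prb_nonneg hP f ω
    calc ∑ ω, P ω * (prb P f ω * prb P g ω / (prb P fg ω * prb P h ω))
        = ∑ ω, ∑ a, ∑ b, (if f a = f ω ∧ g b = g ω then
            P a * P b / prb P h ω * (P ω / prb P fg ω) else 0) := by
          refine Finset.sum_congr rfl fun ω _ => ?_
          have : P ω * (prb P f ω * prb P g ω / (prb P fg ω * prb P h ω)) =
            prb P f ω * (prb P g ω * (P ω / (prb P fg ω * prb P h ω))) := by ring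
          rw [this]
          conv_lhs => rw [prb, Finset.sum_mul]
          refine Finset.sum_congr rfl fun a _ => ?_
          conv_lhs => rw [prb, Finset.sum_mul, Finset.mul_sum]
          refine Finset.sum_congr rfl fun b _ => ?_
          by_cases h1 : f a = f ω <;> by_cases h2 : g b = g ω <;> simp [h1, h2]
          field_simp
      _ ≤ ∑ ω, ∑ a, ∑ b, (if h b = h a then P a * P b / prb P h a else 0) *
            (if f a = f ω ∧ g b = g ω then P ω / prb P fg ω else 0) := by
          refine Finset.sum_le_sum fun ω _ => Finset.sum_le_sum fun a _ =>
            Finset.sum_le_sum fun b _ => ?_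
          by_cases h1 : f a = f ω ∧ g b = g ω
          · have e1 := hf _ _ h1.1
            have e2 := hg _ _ h1.2
            have e3 : prb P h ω = prb P h a := by simp [prb, e1]
            simp [h1, e1, e2, e3]
          · simp [h1]
      _ = ∑ a, ∑ b, (if h b = h a then P a * P b / prb P h a else 0) *
            ∑ ω, (if f a = f ω ∧ g b = g ω then P ω / prb P fg ω else 0) := by
          rw [Finset.sum_comm]
          refine Finset.sum_congr rfl fun a _ => ?_
          rw [Finset.sum_comm]
          refine Finset.sum_congr rfl fun b _ => ?_
          rw [Finset.mul_sum]
      _ ≤ ∑ a, ∑ b, (if h b = h a then P a * P b / prb P h a else 0) * 1 := by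
          refine Finset.sum_le_sum fun a _ => Finset.sum_le_sum fun b _ => ?_
          refine mul_le_mul_of_nonneg_left ?_ ?_
          · by_cases hex : ∃ ω₀, f a = f ω₀ ∧ g b = g ω₀
            · obtain ⟨ω₀, h1, h2⟩ := hex
              refine le_trans (le_of_eq ?_) (sum_div_prb (P := P) fg ω₀)
              refine Finset.sum_congr rfl fun ω _ => ?_
              simp only [hfg, Prod.mk.injEq, h1, h2]
              exact if_congr ⟨fun x => ⟨x.1.symm, x.2.symm⟩, fun x => ⟨x.1.symm, x.2.symm⟩⟩ rfl rfl
            · push Not at hex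
              rw [Finset.sum_eq_zero]
              · exact zero_le_one
              · intro ω _
                rw [if_neg]
                rintro ⟨h1, h2⟩
                exact hex ω h1 h2
          · split_ifs
            · exact div_nonneg (mul_nonneg (hP.1 _) (hP.1 _)) (nn _ _)
            · exact le_rfl
      _ = ∑ a, P a * (prb P h a / prb P h a) := by
          refine Finset.sum_congr rfl fun a _ => ?_
          conv_rhs => rw [prb, Finset.sum_div, Finset.mul_sum]
          refine Finset.sum_congr rfl fun b _ => ?_
          by_cases h1 : h b = h a
          · simp [h1, prb]; ring
          · simp [h1]
      _ ≤ ∑ a, P a * 1 := Finset.sum_le_sum fun a _ =>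
          mul_le_mul_of_nonneg_left (div_self_le_one _) (hP.1 a)
      _ = 1 := by simp [hP.2]

lemma HH_const (hP : IsP P) (c : A) : HH P (fun _ => c) = 0 := by
  simp [HH, prb, hP.2]

lemma HH_pair_le (hP : IsP P) (f : Ω → A) (g : Ω → B) :
    HH P (fun ω => (f ω, g ω)) ≤ HH P f + HH P g := by
  have := HH_submod hP (f := f) (g := g) (h := fun _ => ()) (k := fun ω => (f ω, g ω))
    (fun _ _ _ => rfl) (fun _ _ _ => rfl) (fun x y h1 h2 => by simp [h1, h2])
  rwa [HH_const hP, add_zero] at this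

/-- push-forward -/
def pshw [Fintype B] (φ : Ω → B) (P : Ω → ℝ) (b : B) : ℝ := ∑ ω, if φ ω = b then P ω else 0

lemma sum_pshw [Fintype B] (φ : Ω → B) (P : Ω → ℝ) (F : B → ℝ) :
    ∑ b, pshw φ P b * F b = ∑ ω, P ω * F (φ ω) := by
  simp only [pshw, Finset.sum_mul]
  rw [Finset.sum_comm]
  refine Finset.sum_congr rfl fun ω _ => ?_
  simp [ite_mul]

lemma isP_pshw [Fintype B] (hP : IsP P) (φ : Ω → B) : IsP (pshw φ P) := by
  refine ⟨fun b => Finset.sum_nonneg fun i _ => by split_ifs; exacts [hP.1 i, le_rfl], ?_⟩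
  have := sum_pshw φ P (fun _ => 1)
  simpa [hP.2] using this

lemma prb_pshw [Fintype B] (φ : Ω → B) (f : B → C) (ω : Ω) :
    prb (pshw φ P) f (φ ω) = prb P (fun ω => f (φ ω)) ω := by
  have := sum_pshw φ P (fun b => if f b = f (φ ω) then 1 else 0)
  simp only [mul_ite, mul_one, mul_zero] at this
  exact this

lemma HH_pshw [Fintype B] (φ : Ω → B) (f : B → C) :
    HH (pshw φ P) f = HH P (fun ω => f (φ ω)) := by
  unfold HH
  rw [sum_pshw]
  simp only [prb_pshw]

lemma pshw_comp [Fintype B] [Fintype C] (φ : Ω → B) (f : B → C) :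
    pshw f (pshw φ P) = pshw (fun ω => f (φ ω)) P := by
  funext c
  have := sum_pshw φ P (fun b => if f b = c then 1 else 0)
  simp only [mul_ite, mul_one, mul_zero] at this
  exact this

/-- mixtures -/
def mix {U : Type} (a : U → ℝ) (Q : U → Ω → ℝ) : U × Ω → ℝ := fun z => a z.1 * Q z.1 z.2

lemma isP_mix {U : Type} [Fintype U] {a : U → ℝ} {Q : U → Ω → ℝ} (ha : IsP a)
    (hQ : ∀ u, IsP (Q u)) : IsP (mix a Q) := by
  refine ⟨fun z => mul_nonneg (ha.1 _) ((hQ _).1 _), ?_⟩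
  rw [Fintype.sum_prod_type]
  simp only [mix, ← Finset.mul_sum, (hQ _).2, mul_one, ha.2]

lemma pshw_fst_mix {U : Type} [Fintype U] {a : U → ℝ} {Q : U → Ω → ℝ}
    (hQ : ∀ u, IsP (Q u)) : pshw Prod.fst (mix a Q) = a := by
  funext u
  rw [pshw, Fintype.sum_prod_type]
  rw [Finset.sum_eq_single u]
  · simp [mix, ← Finset.mul_sum, (hQ _).2]
  · intro b _ hb; simp [hb]
  · simp

lemma HH_mix_fst {U : Type} [Fintype U] {a : U → ℝ} {Q : U → Ω → ℝ}
    (hQ : ∀ u, IsP (Q u)) (f : U → A) : HH (mix a Q) (fun z => f z.1) = HH a f := by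
  conv_rhs => rw [← pshw_fst_mix (a := a) hQ, HH_pshw]

lemma prb_id {U : Type} [Fintype U] (a : U → ℝ) (u : U) : prb a id u = a u := by
  simp [prb]

/-- chain rule for mixtures -/
lemma HH_mix {U : Type} [Fintype U] {a : U → ℝ} {Q : U → Ω → ℝ} (ha : IsP a)
    (hQ : ∀ u, IsP (Q u)) (f : U × Ω → A) :
    HH (mix a Q) (fun z => (z.1, f z)) = HH a id + ∑ u, a u * HH (Q u) (fun ω => f (u, ω)) := by
  have e : ∀ u ω, prb (mix a Q) (fun z => (z.1, f z)) (u, ω)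
      = a u * prb (Q u) (fun ω => f (u, ω)) ω := by
    intro u ω
    rw [prb, Fintype.sum_prod_type, Finset.sum_eq_single u]
    · simp only [Prod.mk.injEq, true_and, mix, prb, Finset.mul_sum]
      exact Finset.sum_congr rfl fun i _ => by split_ifs <;> simp
    · intro b _ hb; simp [hb]
    · simp
  unfold HH
  rw [Fintype.sum_prod_type]
  have : ∀ u, ∑ ω, mix a Q (u, ω) * Real.log (prb (mix a Q) (fun z => (z.1, f z)) (u, ω))
      = a u * Real.log (a u) + a u * ∑ ω, Q u ω * Real.log (prb (Q u) (fun ω => f (u, ω)) ω) := by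
    intro u
    rcases (ha.1 u).eq_or_lt with h0 | h0
    · simp [mix, ← h0]
    · have : a u * Real.log (a u) = ∑ ω, a u * (Q u ω * Real.log (a u)) := by
        rw [← Finset.mul_sum, ← Finset.sum_mul, (hQ u).2, one_mul]
      rw [this, Finset.mul_sum, ← Finset.sum_add_distrib]
      refine Finset.sum_congr rfl fun ω _ => ?_
      rcases ((hQ u).1 ω).eq_or_lt with h1 | h1
      · simp [mix, ← h1]
      · rw [e, Real.log_mul h0.ne' (h1.trans_le (le_prb (hQ u) _ ω)).ne']
        simp only [mix]; ring
  simp only [this, Finset.sum_add_distrib, prb_id]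
  simp only [mul_neg, Finset.sum_neg_distrib]
  ring

/-- product weights -/
def prd {Ω' : Type} (P : Ω → ℝ) (Q : Ω' → ℝ) : Ω × Ω' → ℝ := fun z => P z.1 * Q z.2

variable {Ω' : Type} [Fintype Ω'] {Q : Ω' → ℝ}

lemma isP_prd (hP : IsP P) (hQ : IsP Q) : IsP (prd P Q) :=
  isP_mix (a := P) (Q := fun _ => Q) hP fun _ => hQ

lemma HH_prd_fst (hQ : IsP Q) (f : Ω → A) : HH (prd P Q) (fun z => f z.1) = HH P f :=
  HH_mix_fst (a := P) (Q := fun _ => Q) (fun _ => hQ) f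

lemma pshw_prd {E F : Type} [Fintype E] [Fintype F] (φ : Ω → E) (ψ : Ω' → F) :
    pshw (fun z : Ω × Ω' => (φ z.1, ψ z.2)) (prd P Q) = prd (pshw φ P) (pshw ψ Q) := by
  funext ⟨a, b⟩
  simp only [pshw, prd, Fintype.sum_prod_type, Finset.sum_mul, Finset.mul_sum, Prod.mk.injEq]
  rw [Finset.sum_comm]
  refine Finset.sum_congr rfl fun i _ => Finset.sum_congr rfl fun j _ => ?_
  by_cases h1 : φ j = a <;> by_cases h2 : ψ i = b <;> simp [h1, h2]

lemma pshw_swap : pshw (Prod.swap) (prd P Q) = prd Q P := by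
  funext ⟨a, b⟩
  rw [pshw, Finset.sum_eq_single (b, a)]
  · simp [prd, mul_comm]
  · rintro ⟨x, y⟩ _ hb
    simp only [Prod.swap_prod_mk, Prod.mk.injEq]
    rw [if_neg]
    rintro ⟨rfl, rfl⟩; exact hb rfl
  · simp

lemma HH_prd_snd (hP : IsP P) (g : Ω' → A) : HH (prd P Q) (fun z => g z.2) = HH Q g := by
  rw [← HH_prd_fst (P := Q) hP g, ← pshw_swap (P := P) (Q := Q), HH_pshw]; rfl

lemma HH_prd_pair (hP : IsP P) (hQ : IsP Q) (f : Ω → A) (g : Ω' → B) :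
    HH (prd P Q) (fun z => (f z.1, g z.2)) = HH P f + HH Q g := by
  -- pass to f = id through the pushforward to a finite type
  have h1 : ∀ f : Ω → A, HH (prd P Q) (fun z => (z.1, g z.2)) = HH P id + HH Q g := by
    intro f
    have := HH_mix (a := P) (Q := fun _ => Q) hP (fun _ => hQ) (fun z => g z.2)
    simp only [← Finset.sum_mul, hP.2, one_mul] at this
    exact this
  -- general: direct computation
  have e : ∀ x y, prb (prd P Q) (fun z => (f z.1, g z.2)) (x, y) = prb P f x * prb Q g y := by
    intro x y
    simp only [prb, prd, Fintype.sum_prod_type, Finset.sum_mul, Finset.mul_sum, Prod.mk.injEq]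
    rw [Finset.sum_comm]
    refine Finset.sum_congr rfl fun i _ => Finset.sum_congr rfl fun j _ => ?_
    by_cases h1 : f j = f x <;> by_cases h2 : g i = g y <;> simp [h1, h2]
  unfold HH
  rw [Fintype.sum_prod_type]
  have : ∀ x y, prd P Q (x, y) * Real.log (prb (prd P Q) (fun z => (f z.1, g z.2)) (x, y))
      = (P x * Real.log (prb P f x)) * Q y + P x * (Q y * Real.log (prb Q g y)) := by
    intro x y
    rw [e]
    simp only [prd]
    rcases (hP.1 x).eq_or_lt with h0 | h0
    · simp [← h0]
    rcases (hQ.1 y).eq_or_lt with h1 | h1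
    · simp [← h1]
    rw [Real.log_mul (h0.trans_le (le_prb hP _ x)).ne' (h1.trans_le (le_prb hQ _ y)).ne']
    ring
  simp only [this, Finset.sum_add_distrib, ← Finset.mul_sum, ← Finset.sum_mul, hP.2, hQ.2]
  ring

/-! conditional families -/

/-- marginal weight and conditional law of `X` given `U = u` -/
def cnd [Fintype B] [Fintype C] (P : Ω → ℝ) (U : Ω → B) (X : Ω → C) (u : B) : C → ℝ :=
  if pshw U P u = 0 then pshw X P else fun c => pshw (fun ω => (U ω, X ω)) P (u, c) / pshw U P u

lemma sum_joint [Fintype B] [Fintype C] (U : Ω → B) (X : Ω → C) (u : B) :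
    ∑ c, pshw (fun ω => (U ω, X ω)) P (u, c) = pshw U P u := by
  simp only [pshw]
  rw [Finset.sum_comm]
  refine Finset.sum_congr rfl fun ω _ => ?_
  by_cases h : U ω = u <;> simp [h]

lemma isP_cnd [Fintype B] [Fintype C] (hP : IsP P) (U : Ω → B) (X : Ω → C) (u : B) :
    IsP (cnd P U X u) := by
  unfold cnd
  split_ifs with h
  · exact isP_pshw hP X
  · refine ⟨fun c => div_nonneg ((isP_pshw hP _).1 _) ((isP_pshw hP _).1 _), ?_⟩
    rw [← Finset.sum_div, sum_joint, div_self h]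

lemma mix_cnd [Fintype B] [Fintype C] (hP : IsP P) (U : Ω → B) (X : Ω → C) :
    mix (pshw U P) (cnd P U X) = pshw (fun ω => (U ω, X ω)) P := by
  funext ⟨u, c⟩
  simp only [mix, cnd]
  by_cases h : pshw U P u = 0
  · rw [h, zero_mul]
    have h1 := sum_joint (P := P) U X u
    rw [h, Finset.sum_eq_zero_iff_of_nonneg (fun c _ => (isP_pshw hP _).1 _)] at h1
    exact (h1 c (Finset.mem_univ _)).symm
  · simp [h]; field_simp

lemma HH_cnd [Fintype B] [Fintype C] (hP : IsP P) (U : Ω → B) (X : Ω → C) (f : C → D) :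
    ∑ u, pshw U P u * HH (cnd P U X u) f = HH P (fun ω => (U ω, f (X ω))) - HH P U := by
  have := HH_mix (isP_pshw hP U) (isP_cnd hP U X) (fun z => f z.2)
  rw [mix_cnd hP, HH_pshw, HH_pshw] at this
  simp only [id] at this
  rw [this]; simp

/-- two independent families -/
lemma HH_cnd2 {B' C' : Type} [Fintype B] [Fintype C] [Fintype B'] [Fintype C'] (hP : IsP P)
    (hQ : IsP Q) (U : Ω → B) (X : Ω → C) (W : Ω' → B') (Y : Ω' → C') (f : C × C' → D) :
    ∑ u, ∑ w, pshw U P u * pshw W Q w * HH (prd (cnd P U X u) (cnd Q W Y w)) f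
      = HH (prd P Q) (fun z => ((U z.1, W z.2), f (X z.1, Y z.2))) - HH P U - HH Q W := by
  have h := HH_mix (a := prd (pshw U P) (pshw W Q))
    (Q := fun z => prd (cnd P U X z.1) (cnd Q W Y z.2))
    (isP_prd (isP_pshw hP U) (isP_pshw hQ W))
    (fun z => isP_prd (isP_cnd hP U X _) (isP_cnd hQ W Y _)) (fun z => f z.2)
  have e : mix (prd (pshw U P) (pshw W Q)) (fun z => prd (cnd P U X z.1) (cnd Q W Y z.2))
      = pshw (fun z : Ω × Ω' => ((U z.1, W z.2), (X z.1, Y z.2))) (prd P Q) := by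
    have e1 : pshw (fun z : (B × C) × (B' × C') => ((z.1.1, z.2.1), (z.1.2, z.2.2)))
        (prd (mix (pshw U P) (cnd P U X)) (mix (pshw W Q) (cnd Q W Y)))
        = mix (prd (pshw U P) (pshw W Q)) (fun z => prd (cnd P U X z.1) (cnd Q W Y z.2)) := by
      funext ⟨⟨u, w⟩, ⟨c, d⟩⟩
      rw [pshw, Finset.sum_eq_single ((u, c), (w, d))]
      · simp [prd, mix]; ring
      · rintro ⟨⟨u', c'⟩, ⟨w', d'⟩⟩ _ hne
        rw [if_neg]
        simp only [Prod.mk.injEq]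
        rintro ⟨⟨rfl, rfl⟩, rfl, rfl⟩
        exact hne rfl
      · simp
    rw [← e1, mix_cnd hP, mix_cnd hQ, ← pshw_prd]
    rw [pshw_comp]
  rw [e, HH_pshw] at h
  have h2 : HH (prd (pshw U P) (pshw W Q)) id = HH P U + HH Q W := by
    have := HH_prd_pair (isP_pshw hP U) (isP_pshw hQ W) id id
    rw [HH_pshw, HH_pshw] at this
    exact this
  rw [h, h2, Fintype.sum_prod_type]
  simp only [prd]
  ring

end Entropy

set_option linter.unusedSectionVars false
section GroupPart

variable {G : Type} [AddCommGroup G] [Module (ZMod 2) G] [Fintype G]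

def hh (p : G → ℝ) : ℝ := HH p (fun x => x)
def hq (V : Submodule (ZMod 2) G) (p : G → ℝ) : ℝ := HH p (fun x => V.mkQ x)
def cv (p q : G → ℝ) : G → ℝ := pshw (fun z : G × G => z.1 + z.2) (prd p q)
def ss (p q : G → ℝ) : ℝ := hh p + hh q - hh (cv p q)
def sV (V : Submodule (ZMod 2) G) (p q : G → ℝ) : ℝ := hq V p + hq V q - hq V (cv p q)
def dm (V : Submodule (ZMod 2) G) : ℝ := (Module.finrank (ZMod 2) V : ℝ)

lemma mkQ_eq_iff {V : Submodule (ZMod 2) G} {x y : G} : V.mkQ x = V.mkQ y ↔ x - y ∈ V := by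
  simp [Submodule.Quotient.eq]

lemma mk_of_le {V W : Submodule (ZMod 2) G} (h : V ≤ W) {x y : G} (e : V.mkQ x = V.mkQ y) :
    W.mkQ x = W.mkQ y := mkQ_eq_iff.2 (h (mkQ_eq_iff.1 e))

lemma dm_nonneg (V : Submodule (ZMod 2) G) : 0 ≤ dm V := Nat.cast_nonneg _

lemma dm_mono {V W : Submodule (ZMod 2) G} (h : V ≤ W) : dm V ≤ dm W :=
  Nat.cast_le.2 (Submodule.finrank_mono h)

lemma dm_bot : dm (⊥ : Submodule (ZMod 2) G) = 0 := by simp [dm]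

lemma dm_sup_inf (V W : Submodule (ZMod 2) G) : dm (V ⊔ W) + dm (V ⊓ W) = dm V + dm W := by
  unfold dm; exact_mod_cast Submodule.finrank_sup_add_finrank_inf_eq V W

lemma dm_comap (V : Submodule (ZMod 2) G) (W : Submodule (ZMod 2) (G ⧸ V)) [Fintype (G ⧸ V)] :
    dm (W.comap V.mkQ) = dm W + dm V := by
  unfold dm
  have h1 := LinearMap.finrank_range_add_finrank_ker (V.mkQ.domRestrict (W.comap V.mkQ))
  have h2 : (LinearMap.range (V.mkQ.domRestrict (W.comap V.mkQ))) = W := by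
    rw [LinearMap.range_domRestrict, Submodule.map_comap_eq_of_surjective V.mkQ_surjective]
  have h3 : Module.finrank (ZMod 2) (LinearMap.ker (V.mkQ.domRestrict (W.comap V.mkQ)))
      = Module.finrank (ZMod 2) V := by
    rw [LinearMap.ker_domRestrict, Submodule.ker_mkQ]
    have : V ≤ W.comap V.mkQ := by
      intro x hx
      have : V.mkQ x = 0 := by simpa using hx
      simp [Submodule.mem_comap, this]
    exact (Submodule.comapSubtypeEquivOfLe this).finrank_eq
  rw [h2, h3] at h1
  exact_mod_cast h1.symm

lemma card_dm (V : Submodule (ZMod 2) G) : Real.log (Nat.card V) = dm V * Real.log 2 := by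
  rw [Module.natCard_eq_pow_finrank (K := ZMod 2)]
  simp [dm]

lemma log_card_le (V : Submodule (ZMod 2) G) : Real.log (Nat.card V) ≤ dm V := by
  rw [card_dm]
  have := Real.log_two_lt_d9
  have := dm_nonneg V
  nlinarith

section
open scoped Classical
lemma prb_mkQ_sum {p : G → ℝ} (hp : IsP p) (V : Submodule (ZMod 2) G) :
    ∑ x, prb p (fun x => V.mkQ x) x = Nat.card V := by
  simp only [prb]
  rw [Finset.sum_comm]
  have : ∀ y, ∑ x, (if V.mkQ y = V.mkQ x then p y else 0) = p y * Nat.card V := by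
    intro y
    rw [← Finset.sum_filter, Finset.sum_const, nsmul_eq_mul, mul_comm]
    congr 2
    rw [Nat.card_eq_fintype_card, Fintype.card_subtype]
    refine Finset.card_bij (fun x _ => y - x) ?_ ?_ ?_
    · intro x hx; simpa [mkQ_eq_iff, Submodule.Quotient.eq] using hx
    · intro a _ b _ h; simpa using h
    · intro b hb; exact ⟨y - b, by simpa [Submodule.Quotient.eq] using hb, by simp⟩
  simp only [this, ← Finset.sum_mul, hp.2, one_mul]
end

lemma hh_le_hq_add_log {p : G → ℝ} (hp : IsP p) (V : Submodule (ZMod 2) G) :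
    hh p ≤ hq V p + Real.log (Nat.card V) := by
  have hpos : (0:ℝ) < Nat.card V := by exact_mod_cast Nat.card_pos
  have key := gibbs hp (fun x => prb p (fun x => V.mkQ x) x / p x) (Nat.card V) hpos
    (fun x hx => div_pos (hx.trans_le (le_prb hp _ x)) hx) (by
      rw [← prb_mkQ_sum hp V]
      refine Finset.sum_le_sum fun x _ => ?_
      rcases (hp.1 x).eq_or_lt with h0 | h0
      · simp [← h0, prb_nonneg hp]
      · exact le_of_eq (by field_simp))
  have e : ∑ x, p x * Real.log (prb p (fun x => V.mkQ x) x / p x)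
      = ∑ x, (p x * Real.log (prb p (fun x => V.mkQ x) x) - p x * Real.log (prb p (fun x => x) x)) := by
    refine Finset.sum_congr rfl fun x _ => ?_
    rcases (hp.1 x).eq_or_lt with h0 | h0
    · simp [← h0]
    · have := prb_id p x
      rw [Real.log_div (h0.trans_le (le_prb hp _ x)).ne' h0.ne']
      change _ = _ - p x * Real.log (prb p id x)
      rw [this]; ring
  rw [e, Finset.sum_sub_distrib] at key
  unfold hh hq HH
  linarith

lemma hh_le_hq_add {p : G → ℝ} (hp : IsP p) (V : Submodule (ZMod 2) G) :
    hh p ≤ hq V p + dm V := (hh_le_hq_add_log hp V).trans (by linarith [log_card_le V])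

lemma hq_anti {p : G → ℝ} (hp : IsP p) {V W : Submodule (ZMod 2) G} (h : V ≤ W) :
    hq W p ≤ hq V p := HH_mono hp fun _ _ e => mk_of_le h e

lemma hq_le {p : G → ℝ} (hp : IsP p) (V : Submodule (ZMod 2) G) : hq V p ≤ hh p :=
  HH_mono hp fun _ _ e => by rw [e]

lemma hq_nonneg {p : G → ℝ} (hp : IsP p) (V : Submodule (ZMod 2) G) : 0 ≤ hq V p :=
  HH_nonneg hp _

lemma hh_nonneg {p : G → ℝ} (hp : IsP p) : 0 ≤ hh p := HH_nonneg hp _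

lemma hq_bot {p : G → ℝ} (hp : IsP p) : hq ⊥ p = hh p :=
  HH_congr hp fun x y => by rw [mkQ_eq_iff, Submodule.mem_bot, sub_eq_zero]

lemma isP_cv {p q : G → ℝ} (hp : IsP p) (hq : IsP q) : IsP (cv p q) :=
  isP_pshw (isP_prd hp hq) _

lemma cv_comm (p q : G → ℝ) : cv p q = cv q p := by
  unfold cv
  rw [← pshw_swap (P := p) (Q := q), pshw_comp]
  congr 1
  funext z
  simp [add_comm]

lemma hh_cv (p q : G → ℝ) : hh (cv p q) = HH (prd p q) (fun z => z.1 + z.2) := HH_pshw _ _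

lemma hq_cv (V : Submodule (ZMod 2) G) (p q : G → ℝ) :
    hq V (cv p q) = HH (prd p q) (fun z => V.mkQ (z.1 + z.2)) := HH_pshw _ _

section quot
variable (V : Submodule (ZMod 2) G) [Fintype (G ⧸ V)]

lemma hh_quot (p : G → ℝ) : hh (pshw V.mkQ p) = hq V p := HH_pshw _ _

lemma hq_quot {p : G → ℝ} (hp : IsP p) (W : Submodule (ZMod 2) (G ⧸ V)) :
    hq W (pshw V.mkQ p) = hq (W.comap V.mkQ) p := by
  unfold hq
  rw [HH_pshw]
  refine HH_congr hp fun x y => ?_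
  rw [mkQ_eq_iff, mkQ_eq_iff, Submodule.mem_comap, map_sub]

lemma cv_quot (p q : G → ℝ) : cv (pshw V.mkQ p) (pshw V.mkQ q) = pshw V.mkQ (cv p q) := by
  unfold cv
  rw [← pshw_prd, pshw_comp, pshw_comp]
  congr 1

lemma le_comap_mkQ (W : Submodule (ZMod 2) (G ⧸ V)) : V ≤ W.comap V.mkQ := by
  intro x hx
  have : V.mkQ x = 0 := by simpa using hx
  simp [Submodule.mem_comap, this]

lemma ss_quot (p q : G → ℝ) : ss (pshw V.mkQ p) (pshw V.mkQ q) = sV V p q := by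
  unfold ss sV; rw [cv_quot, hh_quot, hh_quot, hh_quot]

lemma sq_quot {p q : G → ℝ} (hp : IsP p) (hq' : IsP q) (W : Submodule (ZMod 2) (G ⧸ V)) :
    sV W (pshw V.mkQ p) (pshw V.mkQ q) = sV (W.comap V.mkQ) p q := by
  unfold sV; rw [cv_quot, hq_quot V hp, hq_quot V hq', hq_quot V (isP_cv hp hq')]

end quot

lemma hq_le_hq_add {p : G → ℝ} (hp : IsP p) {V W : Submodule (ZMod 2) G} (h : V ≤ W) :
    hq V p ≤ hq W p + (dm W - dm V) := by
  have : Fintype (G ⧸ V) := Fintype.ofFinite _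
  have h1 := hh_le_hq_add (isP_pshw hp V.mkQ) (W.map V.mkQ)
  have h2 : (W.map V.mkQ).comap V.mkQ = W := by
    rw [Submodule.comap_map_eq, Submodule.ker_mkQ, sup_eq_left.2 h]
  have h3 := dm_comap V (W.map V.mkQ)
  rw [hh_quot, hq_quot V hp, h2] at h1
  rw [h2] at h3
  linarith

/-- contraction of doubling -/
lemma contract {p q : G → ℝ} (hp : IsP p) (hq' : IsP q) {V W : Submodule (ZMod 2) G} (h : V ≤ W) :
    hq W (cv p q) + hq V p ≤ hq V (cv p q) + hq W p := by
  have hP := isP_prd hp hq'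
  have h1 := HH_submod hP (f := fun z => V.mkQ (z.1 + z.2))
    (g := fun z => (W.mkQ z.1, V.mkQ z.2)) (h := fun z => W.mkQ (z.1 + z.2))
    (k := fun z => (V.mkQ z.1, V.mkQ z.2)) (fun x y e => mk_of_le h e)
    (fun x y e => by
      simp only [Prod.mk.injEq] at e
      rw [map_add, map_add, e.1, mk_of_le h e.2])
    (fun x y e1 e2 => by
      simp only [Prod.mk.injEq] at e2 ⊢
      refine ⟨?_, e2.2⟩
      rw [map_add, map_add, e2.2] at e1
      exact add_right_cancel e1)
  rw [HH_prd_pair hp hq' (fun x => V.mkQ x) (fun x => V.mkQ x),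
    HH_prd_pair hp hq' (fun x => W.mkQ x) (fun x => V.mkQ x)] at h1
  rw [hq_cv, hq_cv]
  unfold hq
  linarith

lemma contract0 {p q : G → ℝ} (hp : IsP p) (hq' : IsP q) (W : Submodule (ZMod 2) G) :
    hq W (cv p q) + hh p ≤ hh (cv p q) + hq W p := by
  have := contract hp hq' (bot_le : ⊥ ≤ W)
  rwa [hq_bot hp, hq_bot (isP_cv hp hq')] at this

lemma hq_top {p : G → ℝ} (hp : IsP p) : hq ⊤ p = 0 := by
  have := HH_congr hp (f := fun x => (⊤ : Submodule (ZMod 2) G).mkQ x) (g := fun _ => ())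
    (fun x y => by rw [mkQ_eq_iff]; simp)
  unfold hq; rw [this, HH_const hp]

lemma hq_le_cv {p q : G → ℝ} (hp : IsP p) (hq' : IsP q) (V : Submodule (ZMod 2) G) :
    hq V p ≤ hq V (cv p q) := by
  have := contract hp hq' (le_top : V ≤ ⊤)
  rw [hq_top hp, hq_top (isP_cv hp hq')] at this
  linarith

lemma hh_le_cv {p q : G → ℝ} (hp : IsP p) (hq' : IsP q) : hh p ≤ hh (cv p q) := by
  have := hq_le_cv hp hq' ⊥
  rwa [hq_bot hp, hq_bot (isP_cv hp hq')] at this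

lemma hh_le_cv' {p q : G → ℝ} (hp : IsP p) (hq' : IsP q) : hh q ≤ hh (cv p q) := by
  rw [cv_comm]; exact hh_le_cv hq' hp

lemma ss_nonneg {p q : G → ℝ} (hp : IsP p) (hq' : IsP q) : 0 ≤ ss p q := by
  have := HH_mono (isP_prd hp hq') (f := fun z => (z.1, z.2)) (g := fun z => z.1 + z.2)
    (fun x y e => by
      simp only [Prod.mk.injEq] at e
      rw [e.1, e.2])
  rw [HH_prd_pair hp hq' (fun x => x) (fun x => x)] at this
  unfold ss; rw [hh_cv]; unfold hh; linarith

lemma ss_le_left {p q : G → ℝ} (hp : IsP p) (hq' : IsP q) : ss p q ≤ hh p := by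
  have := hh_le_cv' hp hq'; unfold ss; linarith

lemma ss_le_right {p q : G → ℝ} (hp : IsP p) (hq' : IsP q) : ss p q ≤ hh q := by
  have := hh_le_cv hp hq'; unfold ss; linarith

lemma sq_le_left {p q : G → ℝ} (hp : IsP p) (hq' : IsP q) (V : Submodule (ZMod 2) G) :
    sV V p q ≤ hq V p := by
  have := hq_le_cv hq' hp V; rw [cv_comm] at this; unfold sV; linarith

/-- `s[X;Y] ≤ s[πX;πY] + H[X|πX]` -/
lemma ss_le_sq {p q : G → ℝ} (hp : IsP p) (hq' : IsP q) (V : Submodule (ZMod 2) G) :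
    ss p q ≤ sV V p q + (hh p - hq V p) := by
  have := contract0 hq' hp V; rw [cv_comm] at this; unfold sV ss; linarith

/-- transversality bound -/
lemma ss_transverse {p q : G → ℝ} (hp : IsP p) (hq' : IsP q) {V A B T : Submodule (ZMod 2) G}
    (hA : V ≤ A) (hB : V ≤ B) (hAT : A ≤ T) (hBT : B ≤ T) :
    ss p q ≤ sV T p q + (hq A p - hq T p) + (hq B q - hq T q) + (dm (A ⊓ B) - dm V)
      + (hh p - hq V p) := by
  have hP := isP_prd hp hq'
  have X : ∀ {C : Type} (f : G → C), HH (prd p q) (fun z => f z.1) = HH p f :=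
    fun f => HH_prd_fst hq' f
  have Y : ∀ {C : Type} (f : G → C), HH (prd p q) (fun z => f z.2) = HH q f :=
    fun f => HH_prd_snd hp f
  have e0 : HH (prd p q) (fun z => (z.1, z.1 + z.2)) = hh p + hh q := by
    rw [hh, hh, ← HH_prd_pair hp hq' (fun x => x) (fun x => x)]
    refine HH_congr hP fun x y => ?_
    simp only [Prod.mk.injEq]
    constructor
    · rintro ⟨h1, h2⟩; rw [h1] at h2; exact ⟨h1, add_left_cancel h2⟩
    · rintro ⟨h1, h2⟩; rw [h1, h2]; exact ⟨rfl, rfl⟩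
  have e1 := HH_submod hP (f := fun z => z.1) (g := fun z => (V.mkQ z.1, z.1 + z.2))
    (h := fun z => V.mkQ z.1) (k := fun z => (z.1, z.1 + z.2))
    (fun x y e => by rw [e]) (fun x y e => (Prod.ext_iff.1 e).1)
    (fun x y e e' => Prod.ext e (Prod.ext_iff.1 e').2)
  rw [X (fun x => x), X (fun x => V.mkQ x), e0] at e1
  have hV : V ≤ A ⊓ B := le_inf hA hB
  have e2 := HH_submod hP (f := fun z => V.mkQ z.1)
    (g := fun z => ((A ⊓ B).mkQ z.1, z.1 + z.2))
    (h := fun z => (A ⊓ B).mkQ z.1) (k := fun z => (V.mkQ z.1, z.1 + z.2))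
    (fun x y e => mk_of_le hV e) (fun x y e => (Prod.ext_iff.1 e).1)
    (fun x y e e' => Prod.ext e (Prod.ext_iff.1 e').2)
  rw [X (fun x => V.mkQ x), X (fun x => (A ⊓ B).mkQ x)] at e2
  have e2' := hq_le_hq_add hp hV
  have e3 : HH (prd p q) (fun z => ((A ⊓ B).mkQ z.1, z.1 + z.2))
      ≤ HH (prd p q) (fun z => (A.mkQ z.1, B.mkQ z.2, z.1 + z.2)) := by
    refine HH_mono hP fun x y e => ?_
    simp only [Prod.mk.injEq, mkQ_eq_iff] at e ⊢
    refine ⟨⟨e.1, ?_⟩, e.2.2⟩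
    have : x.1 - y.1 = -(x.2 - y.2) := by
      have := e.2.2
      have h : x.1 - y.1 + (x.2 - y.2) = 0 := by
        rw [← sub_eq_zero] at this; rw [← this]; abel
      exact eq_neg_of_add_eq_zero_left h
    rw [this]
    exact B.neg_mem e.2.1
  have e4 := HH_submod hP (f := fun z => A.mkQ z.1) (g := fun z => (T.mkQ z.1, z.1 + z.2))
    (h := fun z => T.mkQ z.1) (k := fun z => (A.mkQ z.1, z.1 + z.2))
    (fun x y e => mk_of_le hAT e) (fun x y e => (Prod.ext_iff.1 e).1)
    (fun x y e e' => Prod.ext e (Prod.ext_iff.1 e').2)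
  rw [X (fun x => A.mkQ x), X (fun x => T.mkQ x)] at e4
  have e5 := HH_submod hP (f := fun z => B.mkQ z.2) (g := fun z => (A.mkQ z.1, z.1 + z.2))
    (h := fun z => T.mkQ z.2) (k := fun z => (A.mkQ z.1, B.mkQ z.2, z.1 + z.2))
    (fun x y e => mk_of_le hBT e)
    (fun x y e => by
      simp only [Prod.mk.injEq] at e
      have h1 := mk_of_le hAT e.1
      have h2 := congrArg T.mkQ e.2
      rw [map_add, map_add, h1] at h2
      exact add_left_cancel h2)
    (fun x y e e' => by
      simp only [Prod.mk.injEq] at e' ⊢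
      exact ⟨e'.1, e, e'.2⟩)
  rw [Y (fun x => B.mkQ x), Y (fun x => T.mkQ x)] at e5
  have e6 := HH_submod hP (f := fun z => z.1 + z.2) (g := fun z => (T.mkQ z.1, T.mkQ z.2))
    (h := fun z => T.mkQ (z.1 + z.2)) (k := fun z => (T.mkQ z.1, z.1 + z.2))
    (fun x y e => by rw [e])
    (fun x y e => by
      simp only [Prod.mk.injEq] at e
      rw [map_add, map_add, e.1, e.2])
    (fun x y e e' => by
      simp only [Prod.mk.injEq] at e' ⊢
      exact ⟨e'.1, e⟩)
  rw [HH_prd_pair hp hq' (fun x => T.mkQ x) (fun x => T.mkQ x)] at e6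
  unfold ss sV
  rw [hh_cv, hq_cv]
  unfold hq hh at *
  linarith

end GroupPart

set_option linter.unusedSectionVars false
section Fibring

lemma pshw_mid {A B C D : Type} [Fintype A] [Fintype B] [Fintype C] [Fintype D]
    (a : A → ℝ) (b : B → ℝ) (c : C → ℝ) (d : D → ℝ) :
    pshw (fun z : (A × B) × (C × D) => ((z.1.1, z.2.1), (z.1.2, z.2.2)))
      (prd (prd a b) (prd c d)) = prd (prd a c) (prd b d) := by
  classical
  funext ⟨⟨x, y⟩, ⟨z, w⟩⟩
  rw [pshw, Finset.sum_eq_single ((x, z), (y, w))]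
  · simp [prd]; ring
  · rintro ⟨⟨x', y'⟩, ⟨z', w'⟩⟩ _ hb
    rw [if_neg]
    intro h
    simp only [Prod.mk.injEq] at h
    exact hb (by rw [h.1.1, h.1.2, h.2.1, h.2.2])
  · simp

lemma HH_mid {A B C D F : Type} [Fintype A] [Fintype B] [Fintype C] [Fintype D]
    (a : A → ℝ) (b : B → ℝ) (c : C → ℝ) (d : D → ℝ) (f : (A × C) × (B × D) → F) :
    HH (prd (prd a b) (prd c d)) (fun z => f ((z.1.1, z.2.1), (z.1.2, z.2.2)))
      = HH (prd (prd a c) (prd b d)) f := by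
  rw [← pshw_mid, HH_pshw]

variable {G : Type} [AddCommGroup G] [Module (ZMod 2) G] [Fintype G]

/-- law of `X` given `X + Y = u` -/
def fam (p q : G → ℝ) (u : G) : G → ℝ := cnd (prd p q) (fun z => z.1 + z.2) Prod.fst u

def EE (p q : G → ℝ) : ℝ := HH (prd (prd p q) (prd q p))
  (fun z => ((z.1.1 + z.1.2, z.2.1 + z.2.2), z.1.1 + z.2.1))

def JJ (p q : G → ℝ) : ℝ := 4 * hh (cv p q) - EE p q - hh (cv (cv p q) (cv p q))

lemma isP_fam {p q : G → ℝ} (hp : IsP p) (hq' : IsP q) (u : G) : IsP (fam p q u) :=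
  isP_cnd (isP_prd hp hq') _ _ _

lemma HH_sum_fst {p q : G → ℝ} (hp : IsP p) (hq' : IsP q) :
    HH (prd p q) (fun z => (z.1 + z.2, z.1)) = hh p + hh q := by
  rw [hh, hh, ← HH_prd_pair hp hq' (fun x => x) (fun x => x)]
  refine HH_congr (isP_prd hp hq') fun x y => ?_
  simp only [Prod.mk.injEq]
  constructor
  · rintro ⟨h1, h2⟩; rw [h2] at h1; exact ⟨h2, add_left_cancel h1⟩
  · rintro ⟨h1, h2⟩; rw [h1, h2]; exact ⟨rfl, rfl⟩

lemma fam_hh {p q : G → ℝ} (hp : IsP p) (hq' : IsP q) :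
    ∑ u, cv p q u * hh (fam p q u) = ss p q := by
  have := HH_cnd (isP_prd hp hq') (fun z : G × G => z.1 + z.2) Prod.fst (fun x => x)
  rw [HH_sum_fst hp hq', ← hh_cv] at this
  exact this

lemma fam_hq {p q : G → ℝ} (hp : IsP p) (hq' : IsP q) (V : Submodule (ZMod 2) G) :
    ∑ u, cv p q u * (hh (fam p q u) - hq V (fam p q u)) ≤ hh p - hq V p := by
  have h1 := HH_cnd (isP_prd hp hq') (fun z : G × G => z.1 + z.2) Prod.fst (fun x => x)
  have h2 := HH_cnd (isP_prd hp hq') (fun z : G × G => z.1 + z.2) Prod.fst (fun x => V.mkQ x)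
  have h3 := HH_submod (isP_prd hp hq') (f := fun z => (z.1 + z.2, V.mkQ z.1)) (g := fun z => z.1)
    (h := fun z => V.mkQ z.1) (k := fun z => (z.1 + z.2, z.1))
    (fun x y e => (Prod.ext_iff.1 e).2) (fun x y e => by rw [e])
    (fun x y e e' => Prod.ext (Prod.ext_iff.1 e).1 e')
  rw [HH_prd_fst hq' (fun x => x), HH_prd_fst hq' (fun x => V.mkQ x)] at h3
  simp only [mul_sub, Finset.sum_sub_distrib]
  unfold hh hq fam cv
  linarith

/-- sum over pairs of a function of the first coordinate -/
lemma sum_prd_left {U W : Type} [Fintype U] [Fintype W] {b : W → ℝ} (hb : IsP b) (a : U → ℝ)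
    (F : U → ℝ) : ∑ u, ∑ w, a u * b w * F u = ∑ u, a u * F u := by
  refine Finset.sum_congr rfl fun u _ => ?_
  rw [← Finset.sum_mul, ← Finset.mul_sum, hb.2, mul_one]

lemma sum_prd_right {U W : Type} [Fintype U] [Fintype W] {a : U → ℝ} (ha : IsP a) (b : W → ℝ)
    (F : W → ℝ) : ∑ u, ∑ w, a u * b w * F w = ∑ w, b w * F w := by
  rw [Finset.sum_comm]
  refine Finset.sum_congr rfl fun w _ => ?_
  rw [← Finset.sum_mul, ← Finset.sum_mul, ha.2, one_mul]

lemma sum_ss {U W : Type} [Fintype U] [Fintype W] {a : U → ℝ} {b : W → ℝ} (ha : IsP a)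
    (hb : IsP b) (X : U → G → ℝ) (Y : W → G → ℝ) :
    ∑ u, ∑ w, a u * b w * ss (X u) (Y w) = ∑ u, a u * hh (X u) + ∑ w, b w * hh (Y w)
      - ∑ u, ∑ w, a u * b w * HH (prd (X u) (Y w)) (fun z => z.1 + z.2) := by
  rw [← sum_prd_left hb a, ← sum_prd_right ha b]
  simp only [← Finset.sum_add_distrib, ← Finset.sum_sub_distrib]
  refine Finset.sum_congr rfl fun u _ => Finset.sum_congr rfl fun w _ => ?_
  rw [ss, hh_cv]; ring

lemma fib {p q : G → ℝ} (hp : IsP p) (hq' : IsP q) :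
    2 * ss p q + JJ p q = ss (cv p q) (cv p q) +
      ∑ u, ∑ w, cv p q u * cv q p w * ss (fam p q u) (fam q p w) := by
  rw [sum_ss (isP_cv hp hq') (isP_cv hq' hp), fam_hh hp hq', fam_hh hq' hp]
  have := HH_cnd2 (isP_prd hp hq') (isP_prd hq' hp) (fun z : G × G => z.1 + z.2) Prod.fst
    (fun z : G × G => z.1 + z.2) Prod.fst (fun z => z.1 + z.2)
  change ∑ u, ∑ w, cv p q u * cv q p w * HH (prd (fam p q u) (fam q p w)) (fun z => z.1 + z.2)
    = EE p q - _ - _ at this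
  rw [this, ← hh_cv, ← hh_cv]
  unfold JJ ss
  rw [cv_comm q p]; ring

lemma HH_AS {p q : G → ℝ} (hp : IsP p) (hq' : IsP q) :
    HH (prd (prd p q) (prd q p)) (fun z => (z.1.1 + z.2.1, z.1.2 + z.2.2)) = 2 * hh (cv p q) := by
  rw [HH_mid p q q p (fun z => (z.1.1 + z.1.2, z.2.1 + z.2.2)),
    HH_prd_pair (isP_prd hp hq') (isP_prd hq' hp) (fun z => z.1 + z.2) (fun z => z.1 + z.2),
    ← hh_cv, ← hh_cv, cv_comm q p]
  ring

lemma HH_BS {p q : G → ℝ} (hp : IsP p) (hq' : IsP q) :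
    HH (prd (prd p q) (prd q p)) (fun z => (z.1.1 + z.1.2, z.2.1 + z.2.2)) = 2 * hh (cv p q) := by
  rw [HH_prd_pair (isP_prd hp hq') (isP_prd hq' hp) (fun z => z.1 + z.2) (fun z => z.1 + z.2),
    ← hh_cv, ← hh_cv, cv_comm q p]
  ring

lemma HH_S {p q : G → ℝ} : HH (prd (prd p q) (prd q p))
    (fun z => z.1.1 + z.1.2 + (z.2.1 + z.2.2)) = hh (cv (cv p q) (cv p q)) := by
  conv_rhs => rw [hh_cv]
  nth_rw 2 [cv_comm p q]
  unfold cv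
  rw [← pshw_prd, HH_pshw]

lemma JJ_nonneg {p q : G → ℝ} (hp : IsP p) (hq' : IsP q) : 0 ≤ JJ p q := by
  have h := HH_submod (isP_prd (isP_prd hp hq') (isP_prd hq' hp))
    (f := fun z => (z.1.1 + z.2.1, z.1.2 + z.2.2)) (g := fun z => (z.1.1 + z.1.2, z.2.1 + z.2.2))
    (h := fun z => z.1.1 + z.1.2 + (z.2.1 + z.2.2))
    (k := fun z => ((z.1.1 + z.1.2, z.2.1 + z.2.2), z.1.1 + z.2.1))
    (fun x y e => by
      simp only [Prod.mk.injEq] at e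
      rw [add_add_add_comm, e.1, e.2, add_add_add_comm])
    (fun x y e => by
      simp only [Prod.mk.injEq] at e
      rw [e.1, e.2])
    (fun x y e e' => by
      simp only [Prod.mk.injEq] at e e' ⊢
      exact ⟨e', e.1⟩)
  rw [HH_AS hp hq', HH_BS hp hq', HH_S] at h
  unfold JJ EE
  linarith

/-! ### endgame -/

/-- four independent copies -/
def PF (r : G → ℝ) : (G × G) × (G × G) → ℝ := prd (prd r r) (prd r r)
def fA (z : (G × G) × (G × G)) : G := z.1.1 + z.2.1
def fS (z : (G × G) × (G × G)) : G := z.1.1 + z.1.2 + (z.2.1 + z.2.2)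
def fZ (z : (G × G) × (G × G)) : G := z.1.2 + z.2.1
def fU (z : (G × G) × (G × G)) : G × G := (fS z, fZ z)
/-- endgame weights and laws -/
def ew (r : G → ℝ) : G × G → ℝ := pshw fU (PF r)
def el (r : G → ℝ) (u : G × G) : G → ℝ := cnd (PF r) fU fA u

variable {r : G → ℝ}

lemma isP_PF (hr : IsP r) : IsP (PF r) := isP_prd (isP_prd hr hr) (isP_prd hr hr)
lemma isP_ew (hr : IsP r) : IsP (ew r) := isP_pshw (isP_PF hr) _
lemma isP_el (hr : IsP r) (u : G × G) : IsP (el r u) := isP_cnd (isP_PF hr) _ _ _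

lemma pf_SA : pshw (fun z => (z.1.1 + z.2.1, z.1.2 + z.2.2)) (PF r) = prd (cv r r) (cv r r) := by
  unfold cv
  rw [← pshw_prd, PF]
  conv_rhs => rw [← pshw_mid, pshw_comp]

lemma pf_A (hr : IsP r) : pshw fA (PF r) = cv r r := by
  have : pshw Prod.fst (pshw (fun z => (z.1.1 + z.2.1, z.1.2 + z.2.2)) (PF r)) = cv r r := by
    rw [pf_SA]; exact pshw_fst_mix (Q := fun _ => cv r r) (fun _ => isP_cv hr hr)
  rw [pshw_comp] at this
  exact this

lemma ent_AS (hr : IsP r) : HH (PF r) (fun z => (fA z, fS z)) = 2 * hh (cv r r) := by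
  rw [← HH_AS hr hr]
  refine HH_congr (isP_PF hr) fun x y => ?_
  simp only [fA, fS, Prod.mk.injEq]
  constructor
  · rintro ⟨h1, h2⟩
    refine ⟨h1, ?_⟩
    rw [add_add_add_comm x.1.1, add_add_add_comm y.1.1, h1] at h2
    exact add_left_cancel h2
  · rintro ⟨h1, h2⟩
    refine ⟨h1, ?_⟩
    rw [add_add_add_comm, h1, h2, add_add_add_comm]

lemma ent_BS (hr : IsP r) : HH (PF r) (fun z => (z.1.1 + z.1.2, fS z)) = 2 * hh (cv r r) := by
  rw [← HH_BS hr hr]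
  refine HH_congr (isP_PF hr) fun x y => ?_
  simp only [fS, Prod.mk.injEq]
  constructor
  · rintro ⟨h1, h2⟩
    refine ⟨h1, ?_⟩
    rw [h1] at h2
    exact add_left_cancel h2
  · rintro ⟨h1, h2⟩
    refine ⟨h1, ?_⟩
    rw [h1, h2]

lemma HH_PF_swap {C : Type} (f : (G × G) × (G × G) → C) :
    HH (PF r) (fun z => f (z.1.swap, z.2)) = HH (PF r) f := by
  have : PF r = pshw (fun z : (G × G) × (G × G) => (Prod.swap z.1, (fun z => z) z.2)) (PF r) := by
    have e : pshw (fun z : G × G => z) (prd r r) = prd r r := by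
      classical
      funext z
      rw [pshw, Finset.sum_eq_single z]
      · simp
      · intro b _ hb; simp [hb]
      · simp
    have e' := pshw_prd (P := prd r r) (Q := prd r r) (Prod.swap) (fun z : G × G => z)
    rw [pshw_swap, e] at e'
    exact e'.symm
  conv_rhs => rw [this, HH_pshw]

lemma ent_U (hr : IsP r) : HH (PF r) fU = 2 * hh (cv r r) := by
  rw [← ent_AS hr, ← HH_PF_swap]
  refine HH_congr (isP_PF hr) fun x y => ?_
  simp only [fA, fS, fZ, fU, Prod.mk.injEq, Prod.fst_swap, Prod.snd_swap]
  rw [add_comm x.1.2, add_comm y.1.2]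
  exact and_comm

lemma ent_S : HH (PF r) fS = hh (cv (cv r r) (cv r r)) := HH_S

lemma ent_UA (hr : IsP r) : HH (PF r) (fun z => (fU z, fA z)) = EE r r := by
  refine HH_congr (isP_PF hr) fun x y => ?_
  have c2 : ∀ z : (G × G) × (G × G), fZ z = fA z + (z.1.1 + z.1.2) := fun z => by
    rw [fZ, fA]
    have := ZModModule.add_self z.1.1
    calc z.1.2 + z.2.1 = (z.1.1 + z.1.1) + (z.1.2 + z.2.1) := by rw [this, zero_add]
      _ = _ := by abel
  simp only [fU, Prod.mk.injEq, c2]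
  simp only [fA, fS]
  constructor
  · rintro ⟨⟨h1, h2⟩, h3⟩
    rw [h3] at h2
    have h4 := add_left_cancel h2
    rw [h4] at h1
    exact ⟨⟨h4, add_left_cancel h1⟩, h3⟩
  · rintro ⟨⟨h1, h2⟩, h3⟩
    rw [h1, h2, h3]
    exact ⟨⟨rfl, rfl⟩, rfl⟩

lemma el_hq (hr : IsP r) (V : Submodule (ZMod 2) G) :
    ∑ u, ew r u * (hh (el r u) - hq V (el r u)) ≤ hh (cv r r) - hq V (cv r r) := by
  have h1 := HH_cnd (isP_PF hr) fU fA (fun x => x)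
  have h2 := HH_cnd (isP_PF hr) fU fA (fun x => V.mkQ x)
  have h3 := HH_submod (isP_PF hr) (f := fun z => (fU z, V.mkQ (fA z))) (g := fun z => fA z)
    (h := fun z => V.mkQ (fA z)) (k := fun z => (fU z, fA z))
    (fun x y e => (Prod.ext_iff.1 e).2) (fun x y e => by rw [e])
    (fun x y e e' => Prod.ext (Prod.ext_iff.1 e).1 e')
  have h4 : hh (cv r r) = HH (PF r) (fun z => fA z) := by
    rw [← pf_A hr]; exact HH_pshw _ _
  have h5 : hq V (cv r r) = HH (PF r) (fun z => V.mkQ (fA z)) := by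
    rw [← pf_A hr]; exact HH_pshw _ _
  simp only [mul_sub, Finset.sum_sub_distrib]
  rw [h4, h5]
  unfold hh hq el ew
  linarith

lemma el_hh (hr : IsP r) : ∑ u, ew r u * hh (el r u) = EE r r - 2 * hh (cv r r) := by
  have h1 := HH_cnd (isP_PF hr) fU fA (fun x => x)
  rw [ent_UA hr, ent_U hr] at h1
  exact h1

lemma pshw_mix_fst {U Ω : Type} [Fintype U] [Fintype Ω] (a : U → ℝ) (Q R : U → Ω → ℝ)
    (hR : ∀ u, IsP (R u)) :
    pshw (fun z => (z.1, z.2.1)) (mix a (fun u => prd (Q u) (R u))) = mix a Q := by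
  classical
  funext ⟨u, x⟩
  simp only [pshw, mix, prd, Fintype.sum_prod_type, Prod.mk.injEq]
  rw [Finset.sum_eq_single u]
  · rw [Finset.sum_eq_single x]
    · simp only [and_self, if_true, ← Finset.mul_sum, (hR _).2, mul_one]
    · intro y _ hy; simp [hy]
    · simp
  · intro v _ hv; simp [hv]
  · simp

lemma pshw_mix_snd {U Ω : Type} [Fintype U] [Fintype Ω] (a : U → ℝ) (Q R : U → Ω → ℝ)
    (hQ : ∀ u, IsP (Q u)) :
    pshw (fun z => (z.1, z.2.2)) (mix a (fun u => prd (Q u) (R u))) = mix a R := by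
  classical
  funext ⟨u, x⟩
  simp only [pshw, mix, prd, Fintype.sum_prod_type, Prod.mk.injEq]
  rw [Finset.sum_eq_single u]
  · rw [Finset.sum_comm, Finset.sum_eq_single x]
    · simp only [and_self, if_true, mul_comm (Q u _), ← Finset.mul_sum, (hQ _).2, mul_one]
    · intro y _ hy; simp [hy]
    · simp
  · intro v _ hv; simp [hv]
  · simp

/-- entropic Balog–Szemerédi–Gowers for the endgame -/
lemma el_bsg (hr : IsP r) :
    ∑ u, ew r u * (hh (cv (el r u) (el r u)) - hh (el r u)) ≤ 3 * JJ r r := by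
  set M := mix (ew r) (fun u => prd (el r u) (el r u)) with hM
  have hMP : IsP M := isP_mix (isP_ew hr) fun u => isP_prd (isP_el hr u) (isP_el hr u)
  have hmix : mix (ew r) (el r) = pshw (fun z => (fU z, fA z)) (PF r) := mix_cnd (isP_PF hr) _ _
  have hfst : ∀ {C : Type} (f : (G × G) × G → C),
      HH M (fun z => f (z.1, z.2.1)) = HH (PF r) (fun z => f (fU z, fA z)) := by
    intro C f
    rw [← HH_pshw (P := M) (fun z => (z.1, z.2.1)) f, hM, pshw_mix_fst _ _ _ (isP_el hr), hmix,
      HH_pshw]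
  have hsnd : ∀ {C : Type} (f : (G × G) × G → C),
      HH M (fun z => f (z.1, z.2.2)) = HH (PF r) (fun z => f (fU z, fA z)) := by
    intro C f
    rw [← HH_pshw (P := M) (fun z => (z.1, z.2.2)) f, hM, pshw_mix_snd _ _ _ (isP_el hr), hmix,
      HH_pshw]
  have hew : HH (ew r) id = 2 * hh (cv r r) := by
    rw [← ent_U hr]; exact HH_pshw _ _
  -- joint entropy
  have h1 : HH M (fun z => (z.1, z.2)) = 2 * EE r r - 2 * hh (cv r r) := by
    have := HH_mix (isP_ew hr) (fun u => isP_prd (isP_el hr u) (isP_el hr u))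
      (fun z : (G × G) × (G × G) => z.2)
    rw [← hM] at this
    rw [this, hew]
    have e : ∀ u, HH (prd (el r u) (el r u)) (fun ω => ω) = 2 * hh (el r u) := by
      intro u
      have := HH_prd_pair (isP_el hr u) (isP_el hr u) (fun x => x) (fun x => x)
      rw [show (fun z : G × G => (z.1, z.2)) = fun z => z from rfl] at this
      rw [this, hh]; ring
    simp only [e]
    have := el_hh hr
    have e2 : ∑ u, ew r u * (2 * hh (el r u)) = 2 * ∑ u, ew r u * hh (el r u) := by
      rw [Finset.mul_sum]; refine Finset.sum_congr rfl fun u _ => by ring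
    rw [e2, this]; ring
  have h2 : HH M (fun z => (z.1, z.2.1 + z.2.2)) =
      2 * hh (cv r r) + ∑ u, ew r u * hh (cv (el r u) (el r u)) := by
    have := HH_mix (isP_ew hr) (fun u => isP_prd (isP_el hr u) (isP_el hr u))
      (fun z : (G × G) × (G × G) => z.2.1 + z.2.2)
    rw [← hM] at this
    rw [this, hew]
    simp only [hh_cv]
  -- the marginals
  have mS : HH M (fun z => z.1.1) = hh (cv (cv r r) (cv r r)) := by
    rw [hfst (fun z => z.1.1), ← ent_S]; rfl
  have mU : HH M (fun z => z.1) = 2 * hh (cv r r) := by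
    rw [hfst (fun z => z.1), ← ent_U hr]
  have mA : HH M (fun z => (z.2.1, z.1.1)) = 2 * hh (cv r r) := by
    rw [hfst (fun z => (z.2, z.1.1)), ← ent_AS hr]; rfl
  have mA' : HH M (fun z => (z.2.2, z.1.1)) = 2 * hh (cv r r) := by
    rw [hsnd (fun z => (z.2, z.1.1)), ← ent_AS hr]; rfl
  have c2 : ∀ z : (G × G) × (G × G), fA z + fZ z = z.1.1 + z.1.2 := fun z => by
    rw [fZ, fA]
    have := ZModModule.add_self z.2.1
    calc z.1.1 + z.2.1 + (z.1.2 + z.2.1) = (z.1.1 + z.1.2) + (z.2.1 + z.2.1) := by abel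
      _ = _ := by rw [this, add_zero]
  have mB : HH M (fun z => (z.2.1 + z.1.2, z.1.1)) = 2 * hh (cv r r) := by
    rw [hfst (fun z => (z.2 + z.1.2, z.1.1)), ← ent_BS hr]
    simp only [fU, c2]
  have mB' : HH M (fun z => (z.2.2 + z.1.2, z.1.1)) = 2 * hh (cv r r) := by
    rw [hsnd (fun z => (z.2 + z.1.2, z.1.1)), ← ent_BS hr]
    simp only [fU, c2]
  have s1 := HH_submod hMP (f := fun z => (z.2.1, z.1.1)) (g := fun z => (z.2.2 + z.1.2, z.1.1))
    (h := fun z => z.1.1) (k := fun z => (z.2.1, z.2.2 + z.1.2, z.1.1))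
    (fun x y e => (Prod.ext_iff.1 e).2) (fun x y e => (Prod.ext_iff.1 e).2)
    (fun x y e e' => by
      simp only [Prod.mk.injEq] at e e' ⊢
      exact ⟨e.1, e'⟩)
  have s2 := HH_submod hMP (f := fun z => (z.2.2, z.1.1)) (g := fun z => (z.2.1 + z.1.2, z.1.1))
    (h := fun z => z.1.1) (k := fun z => (z.2.2, z.2.1 + z.1.2, z.1.1))
    (fun x y e => (Prod.ext_iff.1 e).2) (fun x y e => (Prod.ext_iff.1 e).2)
    (fun x y e e' => by
      simp only [Prod.mk.injEq] at e e' ⊢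
      exact ⟨e.1, e'⟩)
  have s3 := HH_submod hMP (f := fun z => (z.2.1, z.2.2 + z.1.2, z.1.1))
    (g := fun z => (z.2.2, z.2.1 + z.1.2, z.1.1))
    (h := fun z => (z.2.1 + z.2.2 + z.1.2, z.1.1)) (k := fun z => (z.1, z.2))
    (fun x y e => by
      simp only [Prod.mk.injEq] at e ⊢
      exact ⟨by rw [add_assoc, add_assoc, e.1, e.2.1], e.2.2⟩)
    (fun x y e => by
      simp only [Prod.mk.injEq] at e ⊢
      exact ⟨by rw [add_comm x.2.1, add_comm y.2.1, add_assoc, add_assoc, e.1, e.2.1], e.2.2⟩)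
    (fun x y e e' => by
      obtain ⟨⟨x1, x2⟩, ⟨x3, x4⟩⟩ := x
      obtain ⟨⟨y1, y2⟩, ⟨y3, y4⟩⟩ := y
      simp only [Prod.mk.injEq] at e e' ⊢
      obtain ⟨h1, h2, h3⟩ := e
      obtain ⟨h4, h5, h6⟩ := e'
      rw [h1] at h5
      exact ⟨⟨h3, add_left_cancel h5⟩, h1, h4⟩)
  have s4 := HH_submod hMP (f := fun z => (z.2.1 + z.2.2 + z.1.2, z.1.1)) (g := fun z => z.1)
    (h := fun z => z.1.1) (k := fun z => (z.1, z.2.1 + z.2.2))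
    (fun x y e => (Prod.ext_iff.1 e).2) (fun x y e => by rw [e])
    (fun x y e e' => by
      simp only [Prod.mk.injEq] at e ⊢
      refine ⟨e', ?_⟩
      have := e.1
      rw [e'] at this
      exact add_right_cancel this)
  simp only [mul_sub, Finset.sum_sub_distrib]
  rw [el_hh hr]
  unfold JJ
  linarith

/-- comparing the two fibrations -/
lemma fam_le_el (hr : IsP r) :
    ∑ u, ∑ w, cv (cv r r) (cv r r) u * cv (cv r r) (cv r r) w
        * ss (fam (cv r r) (cv r r) u) (fam (cv r r) (cv r r) w)
      ≤ (∑ u, ∑ w, ew r u * ew r w * ss (el r u) (el r w)) + 2 * JJ r r := by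
  have ht := isP_cv hr hr
  set t := cv r r with htd
  have f1 := fib ht ht
  have f2 := HH_cnd2 (isP_PF hr) (isP_PF hr) fU fA fU fA (fun z => z.1 + z.2)
  have f3 := sum_ss (isP_ew hr) (isP_ew hr) (el r) (el r)
  have f4 := el_hh hr
  rw [ent_U hr] at f2
  change ∑ u, ∑ w, ew r u * ew r w * HH (prd (el r u) (el r w)) (fun z => z.1 + z.2) = _ at f2
  rw [f2, f4] at f3
  have hPP := isP_prd (isP_PF hr) (isP_PF hr)
  -- EE t t in terms of the big space
  have hE : EE t t = HH (prd (PF r) (PF r)) (fun z => ((fS z.1, fS z.2), fA z.1 + fA z.2)) := by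
    unfold EE
    rw [← pf_SA, ← pshw_prd, HH_pshw]
    congr 1
    funext z
    simp only [fS, fA]
    rw [add_add_add_comm z.1.1.1, add_add_add_comm z.2.1.1]
  have s := HH_submod hPP (f := fun z => ((fS z.1, fS z.2), fA z.1 + fA z.2))
    (g := fun z => (fU z.1, fU z.2)) (h := fun z => (fS z.1, fS z.2))
    (k := fun z => ((fU z.1, fU z.2), fA z.1 + fA z.2))
    (fun x y e => (Prod.ext_iff.1 e).1)
    (fun x y e => by
      simp only [fU, Prod.mk.injEq] at e ⊢
      exact ⟨e.1.1, e.2.1⟩)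
    (fun x y e e' => by
      simp only [Prod.mk.injEq] at e e' ⊢
      exact ⟨e', e.2⟩)
  rw [HH_prd_pair (isP_PF hr) (isP_PF hr) fU fU, HH_prd_pair (isP_PF hr) (isP_PF hr) fS fS,
    ent_U hr, ent_S, ← hE] at s
  have j : JJ r r = 4 * hh t - EE r r - hh (cv t t) := rfl
  have jt : JJ t t = 4 * hh (cv t t) - EE t t - hh (cv (cv t t) (cv t t)) := rfl
  have s1 : ss t t = 2 * hh t - hh (cv t t) := by unfold ss; ring
  have s2 : ss (cv t t) (cv t t) = 2 * hh (cv t t) - hh (cv (cv t t) (cv t t)) := by unfold ss; ring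
  linarith

end Fibring

set_option linter.unusedSectionVars false
section PFR

variable {G : Type} [AddCommGroup G] [Module (ZMod 2) G] [Fintype G]

lemma hh_eq (p : G → ℝ) : hh p = ∑ x, Real.negMulLog (p x) := by
  have : ∀ x, prb p (fun x => x) x = p x := fun x => prb_id p x
  simp only [hh, HH, this, Real.negMulLog, ← Finset.sum_neg_distrib, neg_mul]

lemma cv_apply (p q : G → ℝ) (s : G) : cv p q s = ∑ x, p x * q (s - x) := by
  classical
  simp only [cv, pshw, prd, Fintype.sum_prod_type]
  refine Finset.sum_congr rfl fun x _ => ?_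
  rw [Finset.sum_eq_single (s - x)]
  · simp
  · intro y _ hy
    rw [if_neg]
    rintro rfl
    exact hy (by simp)
  · simp

lemma continuous_cv : Continuous (fun z : (G → ℝ) × (G → ℝ) => cv z.1 z.2) := by
  refine continuous_pi fun s => ?_
  simp only [cv_apply]
  fun_prop

lemma continuous_hh : Continuous (fun p : G → ℝ => hh p) := by
  simp only [hh_eq]
  exact continuous_finsetSum _ fun x _ => Real.continuous_negMulLog.comp (continuous_apply x)

lemma exists_min_pair (F : (G → ℝ) × (G → ℝ) → ℝ) (hF : Continuous F) {p0 : G → ℝ} (h0 : IsP p0) :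
    ∃ p q, IsP p ∧ IsP q ∧ ∀ x y, IsP x → IsP y → F (p, q) ≤ F (x, y) := by
  have hK : IsCompact (stdSimplex ℝ G ×ˢ stdSimplex ℝ G) :=
    (isCompact_stdSimplex ℝ G).prod (isCompact_stdSimplex ℝ G)
  obtain ⟨⟨p, q⟩, hpq, hm⟩ := hK.exists_isMinOn ⟨(p0, p0), h0, h0⟩ hF.continuousOn
  exact ⟨p, q, hpq.1, hpq.2, fun x y hx hy => hm (Set.mk_mem_prod hx hy)⟩

/-- concavity of the entropy of a sum -/
lemma hh_concave {U : Type} [Fintype U] {a : U → ℝ} (ha : IsP a) {X : U → G → ℝ}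
    (hX : ∀ u, IsP (X u)) {c x : G → ℝ} (hc : IsP c) (hb : ∀ y, ∑ u, a u * X u y = x y) :
    ∑ u, a u * hh (cv c (X u)) ≤ hh (cv c x) := by
  set M := mix a (fun u => prd c (X u)) with hM
  have hMP : IsP M := isP_mix ha fun u => isP_prd hc (hX u)
  have h1 := HH_mix ha (fun u => isP_prd hc (hX u)) (fun z : U × (G × G) => z.2.1 + z.2.2)
  have h2 := HH_pair_le hMP (fun z => z.1) (fun z => z.2.1 + z.2.2)
  have h3 : HH M (fun z => z.1) = HH a id := HH_mix_fst (fun u => isP_prd hc (hX u)) id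
  have h4 : pshw Prod.snd M = prd c x := by
    classical
    funext ⟨y, z⟩
    simp only [pshw, hM, mix, prd, Fintype.sum_prod_type]
    rw [← hb, Finset.mul_sum]
    refine Finset.sum_congr rfl fun u _ => ?_
    rw [Finset.sum_eq_single y, Finset.sum_eq_single z]
    · simp; ring
    · intro w _ hw; simp [hw]
    · simp
    · intro w _ hw; simp [hw]
    · simp
  have h5 : HH M (fun z => z.2.1 + z.2.2) = hh (cv c x) := by
    rw [hh_cv, ← h4, HH_pshw]
  rw [← hM] at h1
  simp only [hh_cv] at *
  linarith

lemma cnd_bar {Ω B : Type} [Fintype Ω] [Fintype B] {P : Ω → ℝ} (hP : IsP P) (U : Ω → B)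
    (X : Ω → G) (y : G) : ∑ u, pshw U P u * cnd P U X u y = pshw X P y := by
  classical
  have h := mix_cnd hP U X
  have h1 : ∀ u, pshw U P u * cnd P U X u y = pshw (fun ω => (U ω, X ω)) P (u, y) := by
    intro u; rw [← h]; rfl
  simp only [h1]
  simp only [pshw, Prod.mk.injEq]
  rw [Finset.sum_comm]
  refine Finset.sum_congr rfl fun ω _ => ?_
  rw [Finset.sum_eq_single (U ω)]
  · simp
  · intro b _ hb; simp [hb.symm]
  · simp

lemma fam_bar {p q : G → ℝ} (hp : IsP p) (hq' : IsP q) (y : G) :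
    ∑ u, cv p q u * fam p q u y = p y := by
  have := cnd_bar (isP_prd hp hq') (fun z => z.1 + z.2) Prod.fst y
  have e : pshw Prod.fst (prd p q) = p := pshw_fst_mix (a := p) (Q := fun _ => q) (fun _ => hq')
  rw [e] at this
  exact this

lemma el_bar {r : G → ℝ} (hr : IsP r) (y : G) : ∑ u, ew r u * el r u y = cv r r y := by
  rw [← pf_A hr]; exact cnd_bar (isP_PF hr) fU fA y

def RR (c x : G → ℝ) : ℝ := hh (cv c x) - hh x / 2
def dd (p q : G → ℝ) : ℝ := hh (cv p q) - hh p / 2 - hh q / 2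

lemma dd_eq (p q : G → ℝ) : dd p q = (hh p + hh q) / 2 - ss p q := by unfold dd ss; ring

lemma dd_nonneg {p q : G → ℝ} (hp : IsP p) (hq' : IsP q) : 0 ≤ dd p q := by
  have := hh_le_cv hp hq'; have := hh_le_cv' hp hq'; unfold dd; linarith

lemma RR_cv {c x y : G → ℝ} (hc : IsP c) (hx : IsP x) (hy : IsP y) :
    RR c (cv x y) ≤ RR c x + (hh (cv x y) - hh x) / 2 := by
  have hP := isP_prd hc (isP_prd hx hy)
  have h := HH_submod hP (f := fun z => (z.1 + z.2.1, z.2.2)) (g := fun z => (z.1, z.2.1 + z.2.2))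
    (h := fun z => z.1 + (z.2.1 + z.2.2)) (k := fun z => (z.1, z.2))
    (fun x y e => by
      simp only [Prod.mk.injEq] at e
      rw [← add_assoc, ← add_assoc, e.1, e.2])
    (fun x y e => by
      simp only [Prod.mk.injEq] at e
      rw [e.1, e.2])
    (fun x y e e' => by
      obtain ⟨x1, x2, x3⟩ := x
      obtain ⟨y1, y2, y3⟩ := y
      simp only [Prod.mk.injEq] at e e' ⊢
      obtain ⟨h1, h2⟩ := e
      obtain ⟨h3, h4⟩ := e'
      rw [h3] at h1
      exact ⟨h3, add_left_cancel h1, h2⟩)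
  have e1 : HH (prd c (prd x y)) (fun z => (z.1, z.2)) = hh c + (hh x + hh y) := by
    rw [HH_prd_pair hc (isP_prd hx hy) (fun x => x) (fun x => x)]
    have := HH_prd_pair hx hy (fun x => x) (fun x => x)
    unfold hh
    rw [← this]
  have e2 : HH (prd c (prd x y)) (fun z => (z.1, z.2.1 + z.2.2)) = hh c + hh (cv x y) := by
    rw [HH_prd_pair hc (isP_prd hx hy) (fun x => x) (fun x => x.1 + x.2), hh_cv]; rfl
  have e3 : HH (prd c (prd x y)) (fun z => z.1 + (z.2.1 + z.2.2)) = hh (cv c (cv x y)) := by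
    rw [hh_cv]
    have e : pshw (fun z : G × (G × G) => ((fun x => x) z.1, z.2.1 + z.2.2)) (prd c (prd x y))
        = prd c (cv x y) := by
      rw [pshw_prd (fun x => x) (fun z : G × G => z.1 + z.2)]
      congr 1
      classical
      funext z
      rw [pshw, Finset.sum_eq_single z]
      · simp
      · intro b _ hb; simp [hb]
      · simp
    rw [← e, HH_pshw]
  have e4 : HH (prd c (prd x y)) (fun z => (z.1 + z.2.1, z.2.2)) = hh (cv c x) + hh y := by
    have : HH (prd (prd c x) y) (fun z => (z.1.1 + z.1.2, z.2)) = hh (cv c x) + hh y := by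
      rw [HH_prd_pair (isP_prd hc hx) hy (fun z => z.1 + z.2) (fun x => x), hh_cv]; rfl
    rw [← this]
    have e : prd (prd c x) y = pshw (fun z : G × (G × G) => ((z.1, z.2.1), z.2.2))
        (prd c (prd x y)) := by
      classical
      funext ⟨⟨a, b⟩, d⟩
      rw [pshw, Finset.sum_eq_single (a, (b, d))]
      · simp [prd]; ring
      · rintro ⟨a', b', d'⟩ _ hb
        rw [if_neg]
        intro h
        simp only [Prod.mk.injEq] at h
        exact hb (by rw [h.1.1, h.1.2, h.2])
      · simp
    rw [e, HH_pshw]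
  rw [e1, e2, e3, e4] at h
  unfold RR
  linarith

lemma RR_avg {U : Type} [Fintype U] {a : U → ℝ} (ha : IsP a) {X : U → G → ℝ}
    (hX : ∀ u, IsP (X u)) {c x : G → ℝ} (hc : IsP c) (hb : ∀ y, ∑ u, a u * X u y = x y) :
    ∑ u, a u * RR c (X u) ≤ RR c x + (hh x - ∑ u, a u * hh (X u)) / 2 := by
  have := hh_concave ha hX hc hb
  have e : ∑ u, a u * RR c (X u) = ∑ u, a u * hh (cv c (X u)) - (∑ u, a u * hh (X u)) / 2 := by
    unfold RR
    rw [Finset.sum_div, ← Finset.sum_sub_distrib]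
    exact Finset.sum_congr rfl fun u _ => by ring
  rw [e]; unfold RR; linarith

lemma dd_fib {p q : G → ℝ} (hp : IsP p) (hq' : IsP q) :
    2 * dd p q = dd (cv p q) (cv p q) +
      (∑ u, ∑ w, cv p q u * cv q p w * dd (fam p q u) (fam q p w)) + JJ p q := by
  have h := fib hp hq'
  have e : ∑ u, ∑ w, cv p q u * cv q p w * dd (fam p q u) (fam q p w)
      = (∑ u, cv p q u * hh (fam p q u) + ∑ u, cv q p u * hh (fam q p u)) / 2
        - ∑ u, ∑ w, cv p q u * cv q p w * ss (fam p q u) (fam q p w) := by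
    rw [← sum_prd_left (isP_cv hq' hp) (cv p q), ← sum_prd_right (isP_cv hp hq') (cv q p)]
    simp only [← Finset.sum_add_distrib, ← Finset.sum_sub_distrib, Finset.sum_div]
    refine Finset.sum_congr rfl fun u _ => Finset.sum_congr rfl fun w _ => ?_
    rw [dd_eq]; ring
  rw [e, fam_hh hp hq', fam_hh hq' hp, dd_eq, dd_eq]
  have e2 : ss q p = ss p q := by unfold ss; rw [cv_comm]; ring
  rw [e2]
  have : hh (cv p q) = hh p + hh q - ss p q := by unfold ss; ring
  linarith

section descent
variable {c p q : G → ℝ} {θ : ℝ}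

lemma avg_ge {U W : Type} [Fintype U] [Fintype W] {a : U → ℝ} {b : W → ℝ} (ha : IsP a) (hb : IsP b)
    (F : U → W → ℝ) (m : ℝ) (h : ∀ u w, m ≤ F u w) : m ≤ ∑ u, ∑ w, a u * b w * F u w := by
  have : m = ∑ u, ∑ w, a u * b w * m := by
    simp only [← Finset.sum_mul, ← Finset.mul_sum, ha.2, hb.2, mul_one, one_mul]
  rw [this]
  exact Finset.sum_le_sum fun u _ => Finset.sum_le_sum fun w _ =>
    mul_le_mul_of_nonneg_left (h u w) (mul_nonneg (ha.1 u) (hb.1 w))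

lemma fam_min (hθ : 0 ≤ θ) (hc : IsP c) (hp : IsP p) (hq' : IsP q) (m : ℝ)
    (hm : ∀ x y, IsP x → IsP y → m ≤ dd x y + θ * (RR c x + RR c y)) :
    m ≤ (∑ u, ∑ w, cv p q u * cv q p w * dd (fam p q u) (fam q p w))
      + θ * (RR c p + RR c q + dd p q) := by
  have h := avg_ge (isP_cv hp hq') (isP_cv hq' hp)
    (fun u w => dd (fam p q u) (fam q p w) + θ * (RR c (fam p q u) + RR c (fam q p w))) m
    (fun u w => hm _ _ (isP_fam hp hq' u) (isP_fam hq' hp w))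
  have e : ∑ u, ∑ w, cv p q u * cv q p w *
      (dd (fam p q u) (fam q p w) + θ * (RR c (fam p q u) + RR c (fam q p w)))
      = (∑ u, ∑ w, cv p q u * cv q p w * dd (fam p q u) (fam q p w))
       + θ * (∑ u, cv p q u * RR c (fam p q u) + ∑ w, cv q p w * RR c (fam q p w)) := by
    rw [← sum_prd_left (isP_cv hq' hp) (cv p q), ← sum_prd_right (isP_cv hp hq') (cv q p)]
    simp only [← Finset.sum_add_distrib, Finset.mul_sum]
    refine Finset.sum_congr rfl fun u _ => Finset.sum_congr rfl fun w _ => ?_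
    ring
  rw [e] at h
  have h1 := RR_avg (isP_cv hp hq') (isP_fam hp hq') hc (fam_bar hp hq')
  have h2 := RR_avg (isP_cv hq' hp) (isP_fam hq' hp) hc (fam_bar hq' hp)
  rw [fam_hh hp hq'] at h1
  rw [fam_hh hq' hp] at h2
  have e2 : ss q p = ss p q := by unfold ss; rw [cv_comm]; ring
  rw [e2] at h2
  have h3 : ∑ u, cv p q u * RR c (fam p q u) + ∑ w, cv q p w * RR c (fam q p w)
      ≤ RR c p + RR c q + dd p q := by
    rw [dd_eq]; linarith
  have := mul_le_mul_of_nonneg_left h3 hθ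
  linarith

lemma el_min (hθ : 0 ≤ θ) (hc : IsP c) (hp : IsP p) (m : ℝ)
    (hm : ∀ x y, IsP x → IsP y → m ≤ dd x y + θ * (RR c x + RR c y)) :
    m ≤ 3 * JJ p p + θ * (2 * RR c (cv p p) + JJ p p + dd (cv p p) (cv p p)) := by
  have h1 : m ≤ ∑ u, ew p u * (dd (el p u) (el p u) + θ * (RR c (el p u) + RR c (el p u))) := by
    have : m = ∑ u, ew p u * m := by rw [← Finset.sum_mul, (isP_ew hp).2, one_mul]
    rw [this]
    exact Finset.sum_le_sum fun u _ =>
      mul_le_mul_of_nonneg_left (hm _ _ (isP_el hp u) (isP_el hp u)) ((isP_ew hp).1 u)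
  have e : ∑ u, ew p u * (dd (el p u) (el p u) + θ * (RR c (el p u) + RR c (el p u)))
      = ∑ u, ew p u * (hh (cv (el p u) (el p u)) - hh (el p u))
        + θ * (2 * ∑ u, ew p u * RR c (el p u)) := by
    simp only [← Finset.sum_add_distrib, Finset.mul_sum]
    refine Finset.sum_congr rfl fun u _ => ?_
    unfold dd; ring
  rw [e] at h1
  have h2 := RR_avg (isP_ew hp) (isP_el hp) hc (el_bar hp)
  rw [el_hh hp] at h2
  have h3 := el_bsg hp
  have h4 : 2 * ∑ u, ew p u * RR c (el p u) ≤
      2 * RR c (cv p p) + JJ p p + dd (cv p p) (cv p p) := by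
    unfold JJ dd; linarith
  have := mul_le_mul_of_nonneg_left h4 hθ
  linarith

/-- the minimiser has zero Ruzsa distance -/
lemma dd_min_zero (hc : IsP c) (hp : IsP p) (hq' : IsP q)
    (hm : ∀ x y, IsP x → IsP y → dd p q + 1/40 * (RR c p + RR c q)
      ≤ dd x y + 1/40 * (RR c x + RR c y)) : dd p q = 0 := by
  have hr := isP_cv hp hq'
  have ht := isP_cv hr hr
  set r := cv p q with hrd
  set t := cv r r with htd
  have k0 := dd_nonneg hp hq'
  have f1 := fam_min (by norm_num) hc hp hq' _ hm
  have f2 := fam_min (by norm_num) hc hr hr _ hm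
  have m2 := hm t t ht ht
  have e := el_min (by norm_num) hc hr _ hm
  have d1 := dd_fib hp hq'
  have d2 := dd_fib hr hr
  have j1 := JJ_nonneg hp hq'
  have j2 := JJ_nonneg hr hr
  have r1 := RR_cv hc hp hq'
  have r2 := RR_cv hc hq' hp
  rw [cv_comm q p] at r2
  rw [← hrd] at r1 r2 d1
  rw [← htd] at d2 e
  have r3 := RR_cv hc hr hr
  rw [← htd] at r3
  have k1 : dd p q = hh r - hh p / 2 - hh q / 2 := rfl
  have k2 : dd r r = hh t - hh r / 2 - hh r / 2 := rfl
  have r4 : 2 * RR c r ≤ RR c p + RR c q + dd p q := by linarith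
  have r5 : 2 * RR c t ≤ 2 * RR c r + dd r r := by linarith
  have u1 : dd r r ≤ 41 / 40 * dd p q := by linarith
  nlinarith
end descent

section structure_
open scoped Classical

/-- stabiliser -/
def stabV (q : G → ℝ) : Submodule (ZMod 2) G :=
  AddSubgroup.toZModSubmodule 2
    { carrier := {v | ∀ s, q (s + v) = q s}
      add_mem' := fun {a b} ha hb s => by rw [← add_assoc, hb, ha]
      zero_mem' := fun s => by rw [add_zero]
      neg_mem' := fun {a} ha s => by rw [← ha (s + -a)]; congr 1; abel }

lemma mem_stabV {q : G → ℝ} {v : G} : v ∈ stabV q ↔ ∀ s, q (s + v) = q s := Iff.rfl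

lemma hh_inv {w : G → ℝ} (hw : IsP w) (V : Submodule (ZMod 2) G) (h : ∀ v ∈ V, ∀ s, w (s + v) = w s) :
    hh w = hq V w + Real.log (Nat.card V) := by
  have h1 : ∀ x, prb w (fun x => V.mkQ x) x = Nat.card V * w x := by
    intro x
    rw [prb, ← Finset.sum_filter]
    have : ∀ y ∈ Finset.univ.filter (fun y => V.mkQ y = V.mkQ x), w y = w x := by
      intro y hy
      have := mkQ_eq_iff.1 (Finset.mem_filter.1 hy).2
      rw [← h _ this x]; congr 1; abel
    rw [Finset.sum_congr rfl this, Finset.sum_const, nsmul_eq_mul]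
    congr 2
    rw [Nat.card_eq_fintype_card, Fintype.card_subtype]
    refine Finset.card_bij (fun y _ => y - x) ?_ ?_ ?_
    · intro y hy; simpa [mkQ_eq_iff, Submodule.Quotient.eq] using hy
    · intro a _ b _ h; simpa using h
    · intro b hb; exact ⟨b + x, by simpa [Submodule.Quotient.eq] using hb, by simp⟩
  have hc : (Nat.card V : ℝ) ≠ 0 := by exact_mod_cast (Nat.card_pos (α := V)).ne'
  have h2 : ∀ x, w x * Real.log (prb w (fun x => V.mkQ x) x) = w x * Real.log (Nat.card V)
      + w x * Real.log (w x) := by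
    intro x
    rw [h1]
    by_cases h0 : w x = 0
    · simp [h0]
    · rw [Real.log_mul hc h0]; ring
  rw [hh_eq]
  simp only [hq, HH, h2, Finset.sum_add_distrib, ← Finset.sum_mul, hw.2, Real.negMulLog,
    neg_mul, Finset.sum_neg_distrib]
  ring

lemma indep_of_hh {p q : G → ℝ} (hp : IsP p) (hq' : IsP q) (h : hh (cv p q) = hh q) (x : G)
    (hx : p x ≠ 0) (s : G) : q (s - x) = cv p q s := by
  have hle : ∀ s, ∑ x, p x * Real.negMulLog (q (s - x)) ≤ Real.negMulLog (cv p q s) := by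
    intro s
    have := Real.concaveOn_negMulLog.le_map_sum (t := Finset.univ) (w := p) (p := fun x => q (s - x))
      (fun i _ => hp.1 i) hp.2 (fun i _ => hq'.1 _)
    simpa [cv_apply] using this
  have hsum : ∑ s, ∑ x, p x * Real.negMulLog (q (s - x)) = ∑ s, Real.negMulLog (cv p q s) := by
    rw [← hh_eq, h, Finset.sum_comm]
    have : ∀ x, ∑ s, p x * Real.negMulLog (q (s - x)) = p x * hh q := by
      intro x
      rw [← Finset.mul_sum, hh_eq]
      congr 1
      exact Fintype.sum_equiv (Equiv.subRight x) _ _ (fun s => rfl)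
    simp only [this, ← Finset.sum_mul, hp.2, one_mul]
  have heq : ∀ s, ∑ x, p x * Real.negMulLog (q (s - x)) = Real.negMulLog (cv p q s) := fun s =>
    (Finset.sum_eq_sum_iff_of_le (fun i _ => hle i)).1 hsum s (Finset.mem_univ s)
  have := (Real.strictConcaveOn_negMulLog.map_sum_eq_iff' (t := Finset.univ) (w := p)
    (p := fun x => q (s - x)) (fun i _ => hp.1 i) hp.2 (fun i _ => hq'.1 _)).1 (by
      have := heq s
      simp only [smul_eq_mul]
      rw [this, cv_apply])
  have := this x (Finset.mem_univ _) hx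
  rw [this, cv_apply]; simp
end structure_

/-- weak form of the polynomial Freiman--Ruzsa theorem -/
theorem pfr {p : G → ℝ} (hc : IsP p) : ∃ V : Submodule (ZMod 2) G,
    dm V ≤ 170 * hh p ∧ hq V p ≤ 170 * (hh (cv p p) - hh p) := by
  have cont : Continuous (fun z : (G → ℝ) × (G → ℝ) =>
      dd z.1 z.2 + 1/40 * (RR p z.1 + RR p z.2)) := by
    have c1 : Continuous (fun z : (G → ℝ) × (G → ℝ) => hh (cv z.1 z.2)) :=
      continuous_hh.comp continuous_cv
    have c2 : Continuous (fun z : (G → ℝ) × (G → ℝ) => hh z.1) := continuous_hh.comp continuous_fst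
    have c3 : Continuous (fun z : (G → ℝ) × (G → ℝ) => hh z.2) := continuous_hh.comp continuous_snd
    have c4 : Continuous (fun z : (G → ℝ) × (G → ℝ) => hh (cv p z.1)) :=
      c1.comp (continuous_const.prodMk continuous_fst)
    have c5 : Continuous (fun z : (G → ℝ) × (G → ℝ) => hh (cv p z.2)) :=
      c1.comp (continuous_const.prodMk continuous_snd)
    unfold dd RR
    fun_prop
  obtain ⟨x, y, hx, hy, hm⟩ := exists_min_pair _ cont hc
  have hz := dd_min_zero hc hx hy hm
  have e0 := hm p p hc hc
  simp only at e0
  have l1 := hh_le_cv hx hy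
  have l2 := hh_le_cv' hx hy
  have exy : hh (cv x y) = hh y := by unfold dd at hz; linarith
  have exy' : hh x = hh y := by unfold dd at hz; linarith
  -- the stabiliser
  have hsupp : ∀ a b, x a ≠ 0 → x b ≠ 0 → a - b ∈ stabV y := by
    intro a b ha hb s
    have h1 := indep_of_hh hx hy exy a ha (s + a)
    have h2 := indep_of_hh hx hy exy b hb (s + a)
    rw [← h2] at h1
    rw [add_sub_cancel_right] at h1
    rw [h1]; congr 1; abel
  have hqx : hq (stabV y) x = 0 := by
    have : ∃ a, x a ≠ 0 := by
      by_contra! h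
      have := hx.2
      simp [h] at this
    obtain ⟨a, ha⟩ := this
    unfold hq HH
    rw [neg_eq_zero]
    refine Finset.sum_eq_zero fun b _ => ?_
    by_cases hb : x b = 0
    · simp [hb]
    · have : prb x (fun x => (stabV y).mkQ x) b = 1 := by
        rw [prb, ← hx.2]
        refine Finset.sum_congr rfl fun d _ => ?_
        by_cases hd : x d = 0
        · rw [hd]; exact ite_self 0
        · rw [if_pos (mkQ_eq_iff.2 (hsupp _ _ hd hb))]
      rw [this]; simp
  have b1 := hh_le_hq_add_log hx (stabV y)
  have b2 := hh_inv hy (stabV y) (fun v hv => mem_stabV.1 hv)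
  have b3 := hq_nonneg hy (stabV y)
  have b4 := hh_inv (isP_cv hc hy) (stabV y) (fun v hv s => by
    rw [cv_apply, cv_apply]
    refine Finset.sum_congr rfl fun z _ => ?_
    rw [show s + v - z = (s - z) + v by abel, mem_stabV.1 hv])
  have b5 := hq_le_cv hc hy (stabV y)
  have q1 := hh_le_cv hc hy
  have q2 := hh_le_cv' hc hy
  have q3 := hh_le_cv hc hx
  have q4 := hh_le_cv' hc hx
  have q5 := ss_nonneg hc hc
  have q6 := hh_le_cv hc hc
  have q7 := hh_nonneg hc
  have b6 := card_dm (stabV y)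
  have b7 := Real.log_two_gt_d9
  have b8 := dm_nonneg (stabV y)
  refine ⟨stabV y, ?_, ?_⟩
  · have : dm (stabV y) * Real.log 2 ≤ 85 * hh p := by
      unfold ss at q5
      unfold dd RR at *
      linarith
    nlinarith
  · unfold dd RR at *
    linarith

/-- relative version -/
theorem pfr_rel {p : G → ℝ} (hp : IsP p) (W : Submodule (ZMod 2) G) : ∃ V : Submodule (ZMod 2) G,
    W ≤ V ∧ dm V - dm W ≤ 170 * hq W p ∧ hq V p ≤ 170 * (hh (cv p p) - hh p) := by
  have : Fintype (G ⧸ W) := Fintype.ofFinite _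
  obtain ⟨V, h1, h2⟩ := pfr (isP_pshw hp W.mkQ)
  refine ⟨V.comap W.mkQ, le_comap_mkQ W V, ?_, ?_⟩
  · rw [dm_comap, ← hh_quot]; linarith
  · rw [cv_quot, hh_quot, hh_quot, hq_quot W hp] at h2
    have := contract0 hp hp W
    linarith
end PFR

set_option linter.unusedSectionVars false

section CL
variable {G : Type} [AddCommGroup G] [Module (ZMod 2) G] [Fintype G]
variable {U W : Type} [Fintype U] [Fintype W]

/-- a base subspace together with two families of subspaces -/
abbrev Trip (G U W : Type) [AddCommGroup G] [Module (ZMod 2) G] : Type :=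
  Submodule (ZMod 2) G × (U → Submodule (ZMod 2) G) × (W → Submodule (ZMod 2) G)

def okT (T : Trip G U W) : Prop := (∀ u, T.1 ≤ T.2.1 u) ∧ (∀ w, T.1 ≤ T.2.2 w)

def part (a : U → ℝ) (X : U → G → ℝ) (l : ℝ) (V : Submodule (ZMod 2) G)
    (A : U → Submodule (ZMod 2) G) : ℝ := ∑ u, a u * (hq (A u) (X u) + l * (dm (A u) - dm V))

def Phi (a : U → ℝ) (b : W → ℝ) (X : U → G → ℝ) (Y : W → G → ℝ) (l : ℝ) (T : Trip G U W) : ℝ :=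
  part a X l T.1 T.2.1 + part b Y l T.1 T.2.2 + l ^ 3 * dm T.1

def spr (a : U → ℝ) (V : Submodule (ZMod 2) G) (A : U → Submodule (ZMod 2) G) : ℝ :=
  ∑ u, a u * (dm (A u) - dm V)

def avh (a : U → ℝ) (X : U → G → ℝ) : ℝ := ∑ u, a u * hh (X u)

lemma avh_nonneg {a : U → ℝ} (ha : IsP a) {X : U → G → ℝ} (hX : ∀ u, IsP (X u)) : 0 ≤ avh a X :=
  Finset.sum_nonneg fun u _ => mul_nonneg (ha.1 u) (hh_nonneg (hX u))

lemma spr_nonneg {a : U → ℝ} (ha : IsP a) {V : Submodule (ZMod 2) G} {A : U → Submodule (ZMod 2) G}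
    (h : ∀ u, V ≤ A u) : 0 ≤ spr a V A :=
  Finset.sum_nonneg fun u _ => mul_nonneg (ha.1 u) (sub_nonneg.2 (dm_mono (h u)))

lemma part_eq (a : U → ℝ) (X : U → G → ℝ) (l : ℝ) (V : Submodule (ZMod 2) G)
    (A : U → Submodule (ZMod 2) G) :
    part a X l V A = ∑ u, a u * hq (A u) (X u) + l * spr a V A := by
  unfold part spr
  rw [Finset.mul_sum, ← Finset.sum_add_distrib]
  exact Finset.sum_congr rfl fun u _ => by ring

lemma part_ge {a : U → ℝ} (ha : IsP a) {X : U → G → ℝ} (hX : ∀ u, IsP (X u)) (l : ℝ)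
    (V : Submodule (ZMod 2) G) (A : U → Submodule (ZMod 2) G) :
    l * spr a V A ≤ part a X l V A := by
  rw [part_eq]
  have : 0 ≤ ∑ u, a u * hq (A u) (X u) :=
    Finset.sum_nonneg fun u _ => mul_nonneg (ha.1 u) (hq_nonneg (hX u) _)
  linarith

lemma exists_minT (F : Trip G U W → ℝ) : ∃ T, okT T ∧ ∀ T', okT T' → F T ≤ F T' := by
  obtain ⟨T, h1, h2⟩ := Set.exists_min_image {T : Trip G U W | okT T} F (Set.toFinite _)
    ⟨(⊥, fun _ => ⊥, fun _ => ⊥), fun _ => le_rfl, fun _ => le_rfl⟩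
  exact ⟨T, h1, h2⟩

lemma part_update {a : U → ℝ} (X : U → G → ℝ) (l : ℝ) (V : Submodule (ZMod 2) G)
    (A : U → Submodule (ZMod 2) G) (u : U) (B : Submodule (ZMod 2) G) [DecidableEq U] :
    part a X l V (Function.update A u B) - part a X l V A
      = a u * (hq B (X u) + l * (dm B - dm V)) - a u * (hq (A u) (X u) + l * (dm (A u) - dm V)) := by
  unfold part
  rw [← Finset.sum_sub_distrib, Finset.sum_eq_single u]
  · simp
  · intro v _ hv; simp [Function.update_of_ne hv]
  · simp

lemma part_sup {a : U → ℝ} (ha : IsP a) {X : U → G → ℝ} (hX : ∀ u, IsP (X u)) {l : ℝ}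
    (V : Submodule (ZMod 2) G) (A : U → Submodule (ZMod 2) G) (B : Submodule (ZMod 2) G) :
    part a X l B (fun u => A u ⊔ B) ≤ part a X l V A - l * ∑ u, a u * (dm (A u ⊓ B) - dm V) := by
  unfold part
  rw [Finset.mul_sum, ← Finset.sum_sub_distrib]
  refine Finset.sum_le_sum fun u _ => ?_
  have h1 := dm_sup_inf (A u) B
  have h2 := hq_anti (hX u) (le_sup_left : A u ≤ A u ⊔ B)
  have h3 := mul_le_mul_of_nonneg_left h2 (ha.1 u)
  have h4 : dm (A u ⊔ B) = dm (A u) + dm B - dm (A u ⊓ B) := by linarith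
  rw [h4]
  nlinarith

theorem cl0 (κ l0 : ℝ) (hκ : 0 < κ) (hl0 : 0 < l0) : ∃ Λ : ℝ, 0 < Λ ∧
    ∀ (G U W : Type) [AddCommGroup G] [Module (ZMod 2) G] [Fintype G] [Fintype U] [Fintype W]
      (a : U → ℝ) (b : W → ℝ) (X : U → G → ℝ) (Y : W → G → ℝ), IsP a → IsP b →
      (∀ u, IsP (X u)) → (∀ w, IsP (Y w)) →
      ∃ l : ℝ, 0 < l ∧ l ≤ l0 ∧ ∃ (V : Submodule (ZMod 2) G) (A : U → Submodule (ZMod 2) G)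
        (B : W → Submodule (ZMod 2) G), (∀ u, V ≤ A u) ∧ (∀ w, V ≤ B w) ∧
        dm V ≤ Λ * (avh a X + avh b Y) ∧
        (∀ u T, A u ≤ T → a u * hq (A u) (X u) ≤ a u * (hq T (X u) + l * (dm T - dm (A u)))) ∧
        (∀ w T, B w ≤ T → b w * hq (B w) (Y w) ≤ b w * (hq T (Y w) + l * (dm T - dm (B w)))) ∧
        l * (spr a V A + spr b V B) ≤ κ * (avh a X + avh b Y) ∧
        ∑ u, ∑ w, a u * b w * (dm (A u ⊓ B w) - dm V) ≤ l0 * (avh a X + avh b Y) := by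
  obtain ⟨J, hJ⟩ := exists_nat_gt (2 / κ)
  set lam : ℕ → ℝ := fun j => l0 * (1 / 2) ^ j with hlam
  have lpos : ∀ j, 0 < lam j := fun j => by positivity
  have lanti : ∀ i j, i ≤ j → lam j ≤ lam i := fun i j h => by
    simp only [hlam]
    exact mul_le_mul_of_nonneg_left (pow_le_pow_of_le_one (by norm_num) (by norm_num) h) hl0.le
  refine ⟨1 / lam J ^ 3, by have := lpos J; positivity, ?_⟩
  intro G U W _ _ _ _ _ a b X Y ha hb hX hY
  classical
  set N := avh a X + avh b Y with hN
  have hN0 : 0 ≤ N := add_nonneg (avh_nonneg ha hX) (avh_nonneg hb hY)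
  choose T hok hmin using fun j => exists_minT (Phi a b X Y (lam j))
  have hPN : ∀ j, Phi a b X Y (lam j) (T j) ≤ N := by
    intro j
    have := hmin j (⊥, fun _ => ⊥, fun _ => ⊥) ⟨fun _ => le_rfl, fun _ => le_rfl⟩
    refine this.trans (le_of_eq ?_)
    simp only [Phi, part, hN, avh, dm_bot, sub_self, mul_zero, add_zero, hq_bot (hX _),
      hq_bot (hY _)]
  set D : ℕ → ℝ := fun j => spr a (T j).1 (T j).2.1 + spr b (T j).1 (T j).2.2 with hD
  have hD0 : ∀ j, 0 ≤ D j := fun j => add_nonneg (spr_nonneg ha (hok j).1) (spr_nonneg hb (hok j).2)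
  have hP1 : ∀ j, lam j * D j + lam j ^ 3 * dm (T j).1 ≤ Phi a b X Y (lam j) (T j) := by
    intro j
    have h1 := part_ge ha hX (lam j) (T j).1 (T j).2.1
    have h2 := part_ge hb hY (lam j) (T j).1 (T j).2.2
    simp only [hD, Phi]
    linarith
  have hP0 : ∀ j, 0 ≤ Phi a b X Y (lam j) (T j) := fun j => by
    have h1 := mul_nonneg (lpos j).le (hD0 j)
    have h2 := mul_nonneg (pow_pos (lpos j) 3).le (dm_nonneg (T j).1)
    linarith [hP1 j]
  have step : ∀ j, lam j / 2 * D j ≤ Phi a b X Y (lam j) (T j)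
      - Phi a b X Y (lam (j+1)) (T (j+1)) := by
    intro j
    have h1 := hmin (j+1) (T j) (hok j)
    have h2 : lam (j+1) = lam j / 2 := by simp only [hlam, pow_succ]; ring
    have h3 : Phi a b X Y (lam (j+1)) (T j) ≤ Phi a b X Y (lam j) (T j) - lam j / 2 * D j := by
      rw [h2]
      simp only [Phi, part_eq, hD]
      have := mul_nonneg (pow_pos (lpos j) 3).le (dm_nonneg (T j).1)
      nlinarith
    linarith
  have hex : ∃ j, j < J ∧ lam j * D j ≤ κ * N := by
    by_contra! hcon
    have h1 : ∑ j ∈ Finset.range J, lam j / 2 * D j ≤ N := by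
      refine (Finset.sum_le_sum fun j _ => step j).trans ?_
      rw [Finset.sum_range_sub']
      linarith [hP0 J, hPN 0]
    have hJ0 : 0 < J := by
      have : (0:ℝ) < J := lt_trans (by positivity) hJ
      exact_mod_cast this
    have h2 : ∑ j ∈ Finset.range J, κ * N / 2 < ∑ j ∈ Finset.range J, lam j / 2 * D j :=
      Finset.sum_lt_sum_of_nonempty (Finset.nonempty_range_iff.2 hJ0.ne') fun j hj => by
        have := hcon j (Finset.mem_range.1 hj); linarith
    rw [Finset.sum_const, Finset.card_range, nsmul_eq_mul] at h2
    have h3 : 2 ≤ κ * J := by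
      rw [div_lt_iff₀ hκ] at hJ; linarith
    nlinarith
  obtain ⟨j, hjJ, hj⟩ := hex
  refine ⟨lam j, lpos j, ?_, (T j).1, (T j).2.1, (T j).2.2, (hok j).1, (hok j).2, ?_, ?_, ?_, hj, ?_⟩
  · have := lanti 0 j (Nat.zero_le _); simpa [hlam] using this
  · have h1 := mul_nonneg (lpos j).le (hD0 j)
    have h2 := hP1 j
    have h3 := hPN j
    have h4 : lam J ^ 3 ≤ lam j ^ 3 := pow_le_pow_left₀ (lpos J).le (lanti j J hjJ.le) 3
    have h5 := mul_le_mul_of_nonneg_right h4 (dm_nonneg (T j).1)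
    rw [one_div, ← div_eq_inv_mul, le_div_iff₀ (pow_pos (lpos J) 3)]
    linarith
  · intro u S hS
    have h1 := hmin j ((T j).1, Function.update (T j).2.1 u S, (T j).2.2) ⟨fun v => by
      by_cases hv : v = u
      · subst hv; simpa using ((hok j).1 v).trans hS
      · simpa [Function.update_of_ne hv] using (hok j).1 v, (hok j).2⟩
    have h2 := part_update (a := a) X (lam j) (T j).1 (T j).2.1 u S
    simp only [Phi] at h1
    nlinarith
  · intro w S hS
    have h1 := hmin j ((T j).1, (T j).2.1, Function.update (T j).2.2 w S) ⟨(hok j).1, fun v => by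
      by_cases hv : v = w
      · subst hv; simpa using ((hok j).2 v).trans hS
      · simpa [Function.update_of_ne hv] using (hok j).2 v⟩
    have h2 := part_update (a := b) Y (lam j) (T j).1 (T j).2.2 w S
    simp only [Phi] at h1
    nlinarith
  · have h1 : ∀ w, ∑ u, a u * (dm ((T j).2.1 u ⊓ (T j).2.2 w) - dm (T j).1)
        ≤ lam j ^ 2 * (dm ((T j).2.2 w) - dm (T j).1) := by
      intro w
      have h1 := hmin j ((T j).2.2 w, fun u => (T j).2.1 u ⊔ (T j).2.2 w,
        fun v => (T j).2.2 v ⊔ (T j).2.2 w) ⟨fun _ => le_sup_right, fun _ => le_sup_right⟩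
      have h2 := part_sup ha hX (l := lam j) (T j).1 (T j).2.1 ((T j).2.2 w)
      have h3 := part_sup hb hY (l := lam j) (T j).1 (T j).2.2 ((T j).2.2 w)
      have h4 : 0 ≤ lam j * ∑ v, b v * (dm ((T j).2.2 v ⊓ (T j).2.2 w) - dm (T j).1) :=
        mul_nonneg (lpos j).le (Finset.sum_nonneg fun v _ => mul_nonneg (hb.1 v)
          (sub_nonneg.2 (dm_mono (le_inf ((hok j).2 v) ((hok j).2 w)))))
      simp only [Phi] at h1
      have h5 : lam j * ∑ u, a u * (dm ((T j).2.1 u ⊓ (T j).2.2 w) - dm (T j).1)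
        ≤ lam j * (lam j ^ 2 * (dm ((T j).2.2 w) - dm (T j).1)) := by nlinarith
      exact le_of_mul_le_mul_left h5 (lpos j)
    have h2 : ∑ u, ∑ w, a u * b w * (dm ((T j).2.1 u ⊓ (T j).2.2 w) - dm (T j).1)
        = ∑ w, b w * ∑ u, a u * (dm ((T j).2.1 u ⊓ (T j).2.2 w) - dm (T j).1) := by
      rw [Finset.sum_comm]
      refine Finset.sum_congr rfl fun w _ => ?_
      rw [Finset.mul_sum]
      exact Finset.sum_congr rfl fun u _ => by ring
    have h3 : ∑ w, b w * ∑ u, a u * (dm ((T j).2.1 u ⊓ (T j).2.2 w) - dm (T j).1)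
        ≤ lam j ^ 2 * spr b (T j).1 (T j).2.2 := by
      unfold spr
      rw [Finset.mul_sum]
      refine Finset.sum_le_sum fun w _ => ?_
      have := mul_le_mul_of_nonneg_left (h1 w) (hb.1 w)
      linarith
    have h4 : lam j * spr b (T j).1 (T j).2.2 ≤ N := by
      have e1 := spr_nonneg ha (hok j).1
      have e2 := hP1 j
      have e3 := hPN j
      have e4 := mul_nonneg (pow_pos (lpos j) 3).le (dm_nonneg (T j).1)
      have e5 := mul_nonneg (lpos j).le e1
      simp only [hD] at e2
      linarith
    have h5 : lam j ≤ l0 := by have := lanti 0 j (Nat.zero_le _); simpa [hlam] using this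
    rw [h2]
    refine h3.trans ?_
    have h6 := mul_le_mul_of_nonneg_left h4 (lpos j).le
    have h7 := mul_le_mul_of_nonneg_right h5 hN0
    nlinarith

/-- uniform bound on doubling mass after quotienting -/
def BdL (η L : ℝ) : Prop :=
  ∀ (G : Type) [AddCommGroup G] [Module (ZMod 2) G] [Fintype G] (p q : G → ℝ), IsP p → IsP q →
    ∃ V : Submodule (ZMod 2) G, dm V ≤ L * (hh p + hh q) ∧ sV V p q ≤ η * (hq V p + hq V q)

lemma bd_rel {η L : ℝ} (h : BdL η L) {p q : G → ℝ} (hp : IsP p) (hq' : IsP q)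
    (Q : Submodule (ZMod 2) G) : ∃ T, Q ≤ T ∧ dm T ≤ dm Q + L * (hq Q p + hq Q q) ∧
      sV T p q ≤ η * (hq T p + hq T q) := by
  have : Fintype (G ⧸ Q) := Fintype.ofFinite _
  obtain ⟨V, h1, h2⟩ := h (G ⧸ Q) _ _ (isP_pshw hp Q.mkQ) (isP_pshw hq' Q.mkQ)
  refine ⟨V.comap Q.mkQ, le_comap_mkQ Q V, ?_, ?_⟩
  · rw [dm_comap]; rw [hh_quot, hh_quot] at h1; linarith
  · rwa [sq_quot Q hp hq', hq_quot Q hp, hq_quot Q hq'] at h2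

lemma sum_ab_le {a : U → ℝ} {b : W → ℝ} {F K : U → W → ℝ}
    (h : ∀ u w, a u * b w * F u w ≤ a u * b w * K u w) :
    ∑ u, ∑ w, a u * b w * F u w ≤ ∑ u, ∑ w, a u * b w * K u w :=
  Finset.sum_le_sum fun u _ => Finset.sum_le_sum fun w _ => h u w

/-- expansion of double sums -/
lemma sum_ab_split {a : U → ℝ} {b : W → ℝ} (ha : IsP a) (hb : IsP b) (F : U → ℝ) (K : W → ℝ)
    (M : U → W → ℝ) : ∑ u, ∑ w, a u * b w * (F u + K w + M u w)
      = ∑ u, a u * F u + ∑ w, b w * K w + ∑ u, ∑ w, a u * b w * M u w := by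
  rw [← sum_prd_left hb a, ← sum_prd_right ha b]
  simp only [← Finset.sum_add_distrib]
  exact Finset.sum_congr rfl fun u _ => Finset.sum_congr rfl fun w _ => by ring

theorem cl1 {η L : ℝ} (hη : 0 ≤ η) (hL : 0 ≤ L) (hbd : BdL η L) (κ : ℝ) (hκ : 0 < κ) :
    ∃ Λ : ℝ, 0 < Λ ∧
    ∀ (G U W : Type) [AddCommGroup G] [Module (ZMod 2) G] [Fintype G] [Fintype U] [Fintype W]
      (a : U → ℝ) (b : W → ℝ) (X : U → G → ℝ) (Y : W → G → ℝ), IsP a → IsP b →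
      (∀ u, IsP (X u)) → (∀ w, IsP (Y w)) →
      ∃ V : Submodule (ZMod 2) G, dm V ≤ Λ * (avh a X + avh b Y) ∧
        ∑ u, ∑ w, a u * b w * ss (X u) (Y w) ≤ (η + κ) * (avh a X + avh b Y)
          + ∑ u, a u * (hh (X u) - hq V (X u)) := by
  obtain ⟨Λ, hΛ, H⟩ := cl0 (κ / 2) (κ / (2 * (2 * L + 1))) (by positivity) (by positivity)
  refine ⟨Λ, hΛ, ?_⟩
  intro G U W _ _ _ _ _ a b X Y ha hb hX hY
  obtain ⟨l, hl, hl0, V, A, B, hA, hB, hV, hiiA, hiiB, hiii, hiv⟩ := H G U W a b X Y ha hb hX hY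
  refine ⟨V, hV, ?_⟩
  have hN1 := avh_nonneg ha hX
  have hN2 := avh_nonneg hb hY
  set l0 := κ / (2 * (2 * L + 1)) with hl0d
  have key : ∀ u w, a u * b w * ss (X u) (Y w) ≤ a u * b w *
      (((η + 2 * l * L) * hh (X u) + l * (dm (A u) - dm V) + (hh (X u) - hq V (X u)))
        + ((η + 2 * l * L) * hh (Y w) + l * (dm (B w) - dm V)) + (dm (A u ⊓ B w) - dm V)) := by
    intro u w
    obtain ⟨T, hT, hTd, hTs⟩ := bd_rel hbd (hX u) (hY w) (A u ⊔ B w)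
    have t := ss_transverse (hX u) (hY w) (hA u) (hB w) (le_sup_left.trans hT) (le_sup_right.trans hT)
    have i1 := hiiA u T (le_sup_left.trans hT)
    have i2 := hiiB w T (le_sup_right.trans hT)
    have au := ha.1 u
    have bw := hb.1 w
    have ab := mul_nonneg au bw
    have i1' := mul_le_mul_of_nonneg_right i1 bw
    have i2' := mul_le_mul_of_nonneg_left i2 au
    have d1 := dm_sup_inf (A u) (B w)
    have d2 := dm_mono (le_inf (hA u) (hB w))
    have e1 := hq_le (hX u) T
    have e2 := hq_le (hY w) T
    have e3 := hq_le (hX u) (A u ⊔ B w)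
    have e4 := hq_le (hY w) (A u ⊔ B w)
    have f1 : L * (hq (A u ⊔ B w) (X u) + hq (A u ⊔ B w) (Y w)) ≤ L * (hh (X u) + hh (Y w)) :=
      mul_le_mul_of_nonneg_left (by linarith) hL
    have f2 : η * (hq T (X u) + hq T (Y w)) ≤ η * (hh (X u) + hh (Y w)) :=
      mul_le_mul_of_nonneg_left (by linarith) hη
    have f3 : l * (dm T - dm (A u)) ≤ l * (dm (B w) - dm V + L * (hh (X u) + hh (Y w))) :=
      mul_le_mul_of_nonneg_left (by linarith) hl.le
    have f4 : l * (dm T - dm (B w)) ≤ l * (dm (A u) - dm V + L * (hh (X u) + hh (Y w))) :=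
      mul_le_mul_of_nonneg_left (by linarith) hl.le
    have t' := mul_le_mul_of_nonneg_left t ab
    have s' := mul_le_mul_of_nonneg_left (hTs.trans f2) ab
    have f3' := mul_le_mul_of_nonneg_left f3 ab
    have f4' := mul_le_mul_of_nonneg_left f4 ab
    linarith
  refine (sum_ab_le key).trans ?_
  rw [sum_ab_split ha hb]
  have g1 : ∑ u, a u * ((η + 2 * l * L) * hh (X u) + l * (dm (A u) - dm V)
      + (hh (X u) - hq V (X u))) = (η + 2 * l * L) * avh a X + l * spr a V A
      + ∑ u, a u * (hh (X u) - hq V (X u)) := by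
    unfold avh spr
    rw [Finset.mul_sum, Finset.mul_sum, ← Finset.sum_add_distrib, ← Finset.sum_add_distrib]
    exact Finset.sum_congr rfl fun u _ => by ring
  have g2 : ∑ u, b u * ((η + 2 * l * L) * hh (Y u) + l * (dm (B u) - dm V))
      = (η + 2 * l * L) * avh b Y + l * spr b V B := by
    unfold avh spr
    rw [Finset.mul_sum, Finset.mul_sum, ← Finset.sum_add_distrib]
    exact Finset.sum_congr rfl fun u _ => by ring
  rw [g1, g2]
  have h1 : 2 * l * L * (avh a X + avh b Y) ≤ 2 * l0 * L * (avh a X + avh b Y) :=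
    mul_le_mul_of_nonneg_right (mul_le_mul_of_nonneg_right (by linarith) hL) (by linarith)
  have h2 : (2 * L + 1) * l0 = κ / 2 := by rw [hl0d]; field_simp
  have h3 : 2 * l0 * L * (avh a X + avh b Y) + l0 * (avh a X + avh b Y)
      = κ / 2 * (avh a X + avh b Y) := by rw [← h2]; ring
  linarith

theorem cl2 (κ : ℝ) (hκ : 0 < κ) : ∃ Λ : ℝ, 0 < Λ ∧
    ∀ (G U W : Type) [AddCommGroup G] [Module (ZMod 2) G] [Fintype G] [Fintype U] [Fintype W]
      (a : U → ℝ) (b : W → ℝ) (X : U → G → ℝ) (Y : W → G → ℝ), IsP a → IsP b →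
      (∀ u, IsP (X u)) → (∀ w, IsP (Y w)) →
      ∃ V : Submodule (ZMod 2) G, dm V ≤ Λ * (avh a X + avh b Y) ∧
        ∑ u, ∑ w, a u * b w * ss (X u) (Y w) ≤ κ * (avh a X + avh b Y)
          + 170 * ∑ u, a u * (hh (cv (X u) (X u)) - hh (X u))
          + ∑ u, a u * (hh (X u) - hq V (X u)) := by
  obtain ⟨Λ, hΛ, H⟩ := cl0 (κ / 2) (κ / 342) (by positivity) (by positivity)
  refine ⟨Λ, hΛ, ?_⟩
  intro G U W _ _ _ _ _ a b X Y ha hb hX hY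
  obtain ⟨l, hl, hl0, V, A, B, hA, hB, hV, hiiA, hiiB, hiii, hiv⟩ := H G U W a b X Y ha hb hX hY
  refine ⟨V, hV, ?_⟩
  have hN1 := avh_nonneg ha hX
  have hN2 := avh_nonneg hb hY
  have key : ∀ u w, a u * b w * ss (X u) (Y w) ≤ a u * b w *
      ((170 * l * hh (X u) + 170 * (hh (cv (X u) (X u)) - hh (X u)) + l * (dm (A u) - dm V)
        + (hh (X u) - hq V (X u))) + 0 + (dm (A u ⊓ B w) - dm V)) := by
    intro u w
    have hT : A u ⊔ B w ≤ A u ⊔ B w := le_rfl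
    obtain ⟨S, hS, hSd, hSq⟩ := pfr_rel (hX u) (A u)
    have t := ss_transverse (hX u) (hY w) (hA u) (hB w) (le_sup_left.trans hT) (le_sup_right.trans hT)
    have t2 := sq_le_left (hX u) (hY w) (A u ⊔ B w)
    have i1 := hiiA u S hS
    have i2 := hiiB w _ (le_sup_right.trans hT)
    have au := ha.1 u
    have bw := hb.1 w
    have ab := mul_nonneg au bw
    have i1' := mul_le_mul_of_nonneg_right i1 bw
    have i2' := mul_le_mul_of_nonneg_left i2 au
    have d1 := dm_sup_inf (A u) (B w)
    have d2 := dm_mono (le_inf (hA u) (hB w))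
    have e1 := hq_le (hX u) (A u)
    have f3 : l * (dm S - dm (A u)) ≤ l * (170 * hh (X u)) :=
      mul_le_mul_of_nonneg_left (by linarith) hl.le
    have f4 : l * (dm (A u ⊔ B w) - dm (B w)) ≤ l * (dm (A u) - dm V) :=
      mul_le_mul_of_nonneg_left (by linarith) hl.le
    have t' := mul_le_mul_of_nonneg_left t ab
    have t2' := mul_le_mul_of_nonneg_left t2 ab
    have s' := mul_le_mul_of_nonneg_left hSq ab
    have f3' := mul_le_mul_of_nonneg_left f3 ab
    have f4' := mul_le_mul_of_nonneg_left f4 ab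
    linarith
  refine (sum_ab_le key).trans ?_
  rw [sum_ab_split ha hb]
  have g1 : ∑ u, a u * (170 * l * hh (X u) + 170 * (hh (cv (X u) (X u)) - hh (X u))
      + l * (dm (A u) - dm V) + (hh (X u) - hq V (X u)))
      = 170 * l * avh a X + 170 * ∑ u, a u * (hh (cv (X u) (X u)) - hh (X u)) + l * spr a V A
      + ∑ u, a u * (hh (X u) - hq V (X u)) := by
    unfold avh spr
    rw [Finset.mul_sum, Finset.mul_sum, Finset.mul_sum, ← Finset.sum_add_distrib,
      ← Finset.sum_add_distrib, ← Finset.sum_add_distrib]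
    exact Finset.sum_congr rfl fun u _ => by ring
  rw [g1]
  simp only [mul_zero, Finset.sum_const_zero]
  have h0 := mul_nonneg hl.le (spr_nonneg hb hB)
  have h1 := mul_le_mul_of_nonneg_right hl0 hN1
  nlinarith
end CL

set_option linter.unusedSectionVars false

section Main
variable {G : Type} [AddCommGroup G] [Module (ZMod 2) G] [Fintype G]

lemma irr_bd {η lam : ℝ} (hl : 0 < lam)
    (h : ∀ (G : Type) [AddCommGroup G] [Module (ZMod 2) G] [Fintype G] (p q : G → ℝ),
      IsP p → IsP q → (∀ V, hh p - hq V p + (hh q - hq V q) ≤ lam * dm V) →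
      ss p q ≤ η * (hh p + hh q)) : BdL η (1 / lam) := by
  intro G _ _ _ p q hp hq'
  obtain ⟨V, -, hV⟩ := Set.exists_min_image (Set.univ : Set (Submodule (ZMod 2) G))
    (fun V => hq V p + hq V q + lam * dm V) (Set.toFinite _) ⟨⊥, trivial⟩
  have : Fintype (G ⧸ V) := Fintype.ofFinite _
  refine ⟨V, ?_, ?_⟩
  · have h1 := hV ⊥ trivial
    rw [hq_bot hp, hq_bot hq', dm_bot] at h1
    have h2 := hq_nonneg hp V
    have h3 := hq_nonneg hq' V
    rw [one_div, ← div_eq_inv_mul, le_div_iff₀ hl]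
    linarith
  · have := h (G ⧸ V) _ _ (isP_pshw hp V.mkQ) (isP_pshw hq' V.mkQ) (fun Z => by
      have h1 := hV (Z.comap V.mkQ) trivial
      rw [dm_comap] at h1
      rw [hh_quot, hh_quot, hq_quot V hp, hq_quot V hq']
      linarith)
    rwa [ss_quot, hh_quot, hh_quot] at this

def Rg (a l : ℝ) (p : G → ℝ) : Prop := ∀ V : Submodule (ZMod 2) G, hh p - hq V p ≤ a + l * dm V

lemma isP_unit : IsP (fun _ : Unit => (1:ℝ)) := ⟨fun _ => zero_le_one, by simp⟩

/-- the conclusion of `cl1` -/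
def ClP (ζ Λ : ℝ) : Prop :=
    ∀ (G U W : Type) [AddCommGroup G] [Module (ZMod 2) G] [Fintype G] [Fintype U] [Fintype W]
      (a : U → ℝ) (b : W → ℝ) (X : U → G → ℝ) (Y : W → G → ℝ), IsP a → IsP b →
      (∀ u, IsP (X u)) → (∀ w, IsP (Y w)) →
      ∃ V : Submodule (ZMod 2) G, dm V ≤ Λ * (avh a X + avh b Y) ∧
        ∑ u, ∑ w, a u * b w * ss (X u) (Y w) ≤ ζ * (avh a X + avh b Y)
          + ∑ u, a u * (hh (X u) - hq V (X u))

section round_lem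
variable {η L κ Λ a b l : ℝ} {p q : G → ℝ}

lemma rigid_cv (hη : 0 ≤ η) (hL : 0 ≤ L) (hl : 0 ≤ l) (hbd : BdL η L) (hp : IsP p) (hq' : IsP q)
    (rp : Rg a l p) (rq : Rg a l q) (hs : η * (hh p + hh q) - b ≤ ss p q) :
    Rg (b + 2 * a + 2 * l * L * (hh p + hh q)) (2 * l) (cv p q) := by
  intro V
  obtain ⟨T, h1, h2, h3⟩ := bd_rel hbd hp hq' V
  have e1 := rp T
  have e2 := rq T
  have e3 := hq_anti (isP_cv hp hq') h1
  have e4 := hq_le hp T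
  have e5 := hq_le hq' T
  have e6 := hq_le hp V
  have e7 := hq_le hq' V
  have f1 : η * (hq T p + hq T q) ≤ η * (hh p + hh q) :=
    mul_le_mul_of_nonneg_left (by linarith) hη
  have f2 : L * (hq V p + hq V q) ≤ L * (hh p + hh q) :=
    mul_le_mul_of_nonneg_left (by linarith) hL
  have f3 : l * dm T ≤ l * (dm V + L * (hh p + hh q)) :=
    mul_le_mul_of_nonneg_left (by linarith) hl
  unfold ss at hs
  unfold sV at h3
  nlinarith

/-- bound for `ss r r` -/
lemma ss_rr (hΛ : 0 ≤ Λ) (hl : 0 ≤ l) (hcl : ClP (η + κ) Λ) {r : G → ℝ} (hr : IsP r)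
    (rr : Rg a l r) : ss r r ≤ 2 * (η + κ) * hh r + a + 2 * l * Λ * hh r := by
  obtain ⟨V, h1, h2⟩ := hcl G Unit Unit (fun _ => 1) (fun _ => 1) (fun _ => r) (fun _ => r)
    isP_unit isP_unit (fun _ => hr) (fun _ => hr)
  simp only [avh, Finset.univ_unique, Finset.sum_const, Finset.card_singleton, one_smul, one_mul]
    at h1 h2
  have := rr V
  have := mul_le_mul_of_nonneg_left h1 hl
  linarith

lemma ss_fam (hΛ : 0 ≤ Λ) (hl : 0 ≤ l) (hcl : ClP (η + κ) Λ) (hp : IsP p) (hq' : IsP q)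
    (rp : Rg a l p) : ∑ u, ∑ w, cv p q u * cv q p w * ss (fam p q u) (fam q p w)
      ≤ 2 * (η + κ) * ss p q + a + 2 * l * Λ * ss p q := by
  obtain ⟨V, h1, h2⟩ := hcl G G G (cv p q) (cv q p) (fam p q) (fam q p)
    (isP_cv hp hq') (isP_cv hq' hp) (isP_fam hp hq') (isP_fam hq' hp)
  have e : avh (cv p q) (fam p q) = ss p q := fam_hh hp hq'
  have e' : avh (cv q p) (fam q p) = ss p q := by
    have : avh (cv q p) (fam q p) = ss q p := fam_hh hq' hp
    rw [this]; unfold ss; rw [cv_comm]; ring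
  rw [e, e'] at h1 h2
  have := fam_hq hp hq' V
  have := rp V
  have := mul_le_mul_of_nonneg_left h1 hl
  linarith

lemma round_lem (hη : 0 ≤ η) (hL : 0 ≤ L) (hκ : 0 ≤ κ) (hΛ : 0 ≤ Λ) (hl : 0 ≤ l) (hbd : BdL η L)
    (hcl : ClP (η + κ) Λ) (hp : IsP p) (hq' : IsP q) (rp : Rg a l p) (rq : Rg a l q)
    (hs : η * (hh p + hh q) - b ≤ ss p q) {S : ℝ}
    (hS : (2 * κ + 2 * l * L + 4 * l * Λ) * (hh p + hh q) ≤ S) :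
    Rg (b + 2 * a + S) (2 * l) (cv p q) ∧ JJ p q ≤ 3 * a + 3 * b + S ∧
    ss (cv p q) (cv p q) ≤ 2 * η * hh (cv p q) + (b + 2 * a + S) ∧
    2 * η * hh (cv p q) - (2 * b + a + S) ≤ ss (cv p q) (cv p q) := by
  have hr := isP_cv hp hq'
  have h1 := rigid_cv hη hL hl hbd hp hq' rp rq hs
  have h2 := ss_rr hΛ (by linarith) hcl hr h1
  have h3 := ss_fam hΛ hl hcl hp hq' rp
  have h4 := fib hp hq'
  have h5 := JJ_nonneg hp hq'
  have s0 := ss_nonneg hp hq'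
  have p0 := hh_nonneg hp
  have q0 := hh_nonneg hq'
  have r0 := hh_nonneg hr
  have hrM : hh (cv p q) = hh p + hh q - ss p q := by unfold ss; ring
  set M := hh p + hh q with hM
  have n1 : 0 ≤ κ * hh (cv p q) := mul_nonneg hκ r0
  have n2 : 0 ≤ κ * ss p q := mul_nonneg hκ s0
  have n3 : 0 ≤ l * Λ * hh (cv p q) := mul_nonneg (mul_nonneg hl hΛ) r0
  have n4 : 0 ≤ l * Λ * ss p q := mul_nonneg (mul_nonneg hl hΛ) s0
  have n5 : 0 ≤ l * L * M := mul_nonneg (mul_nonneg hl hL) (by linarith)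
  have eκ : κ * hh (cv p q) = κ * M - κ * ss p q := by rw [hrM]; ring
  have eη : η * hh (cv p q) = η * M - η * ss p q := by rw [hrM]; ring
  have eΛ : l * Λ * hh (cv p q) = l * Λ * M - l * Λ * ss p q := by rw [hrM]; ring
  refine ⟨fun V => ?_, ?_, ?_, ?_⟩
  · have := h1 V
    linarith
  · linarith
  · linarith
  · linarith
end round_lem

set_option maxHeartbeats 1000000 in
/-- improvement step -/
lemma step {η0 L : ℝ} (h0 : 0 < η0) (h1 : η0 ≤ 1 / 2) (hL : 0 ≤ L)
    (hbd : BdL (η0 + η0 ^ 2 / 7000) L) : ∃ L', 0 ≤ L' ∧ BdL (η0 - η0 ^ 2 / 7000) L' := by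
  set δ := η0 ^ 2 / 7000 with hδ
  have hδ0 : 0 < δ := by positivity
  set η := η0 + δ with hη
  have hη0 : 0 ≤ η := by positivity
  have hη1 : η ≤ 1 := by
    have : δ ≤ 1 / 2 := by rw [hδ]; nlinarith
    linarith
  set κ := δ / 24 with hκ
  have hκ0 : 0 < κ := by positivity
  obtain ⟨Λ, hΛ, hcl⟩ := cl1 hη0 hL hbd κ hκ0
  obtain ⟨Λ', hΛ', hcl'⟩ := cl2 κ hκ0
  replace hcl : ClP (η + κ) Λ := hcl
  set lam := δ / (192 * (L + Λ + Λ' + 1)) with hlam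
  have hden : 0 < L + Λ + Λ' + 1 := by positivity
  have hl0 : 0 < lam := by positivity
  have hlE : lam * (L + Λ + Λ' + 1) = δ / 192 := by rw [hlam]; field_simp
  have lL : lam * L ≤ δ / 192 := by
    rw [← hlE]; exact mul_le_mul_of_nonneg_left (by linarith) hl0.le
  have lΛs : lam * L + lam * Λ + lam * Λ' ≤ δ / 192 := by
    rw [← hlE]; nlinarith
  have lΛ0 : 0 ≤ lam * Λ := by positivity
  have lΛ'0 : 0 ≤ lam * Λ' := by positivity
  have lL0 : 0 ≤ lam * L := by positivity
  refine ⟨1 / lam, by positivity, irr_bd hl0 ?_⟩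
  clear_value lam κ η δ
  intro G _ _ _ p q hp hq' hirr
  by_contra hcon
  rw [not_le] at hcon
  set N := hh p + hh q with hN
  have p0 := hh_nonneg hp
  have q0 := hh_nonneg hq'
  have hN0 : 0 ≤ N := by linarith
  have hNpos : 0 < N := by
    rcases hN0.eq_or_lt with h | h
    · exfalso
      rw [← h] at hcon
      have := ss_le_left hp hq'
      linarith
    · exact h
  have rp : Rg 0 lam p := fun V => by have := hirr V; have := hq_le hq' V; linarith
  have rq : Rg 0 lam q := fun V => by have := hirr V; have := hq_le hp V; linarith
  have hr := isP_cv hp hq'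
  have ht := isP_cv hr hr
  set r := cv p q with hrd
  set t := cv r r with htd
  have r0 := hh_nonneg hr
  have t0 := hh_nonneg ht
  have rN : hh r ≤ N := by have := ss_nonneg hp hq'; unfold ss at this; linarith
  have tN : hh t ≤ 2 * N := by have := ss_nonneg hr hr; unfold ss at this; linarith
  have δN : 0 < δ * N := mul_pos hδ0 hNpos
  -- the error terms
  have err : ∀ m M : ℝ, 0 ≤ m → m ≤ 4 → 0 ≤ M → M ≤ 4 * N →
      (2 * κ + 2 * (m * lam) * L + 4 * (m * lam) * Λ) * M ≤ δ * N := by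
    intro m M hm hm4 hM hM4
    have e1 : 2 * κ + 2 * (m * lam) * L + 4 * (m * lam) * Λ ≤ δ / 4 := by
      have a1 : m * (lam * L) ≤ 4 * (lam * L) := mul_le_mul_of_nonneg_right hm4 lL0
      have a2 : m * (lam * Λ) ≤ 4 * (lam * Λ) := mul_le_mul_of_nonneg_right hm4 lΛ0
      rw [hκ]; nlinarith
    calc _ ≤ δ / 4 * M := mul_le_mul_of_nonneg_right e1 hM
      _ ≤ δ / 4 * (4 * N) := mul_le_mul_of_nonneg_left hM4 (by positivity)
      _ = _ := by ring
  have s1 : η * (hh p + hh q) - 2 * (δ * N) ≤ ss p q := by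
    rw [← hN]; rw [hη]; linarith
  obtain ⟨R1, J1, U1, D1⟩ := round_lem (S := δ * N) hη0 hL hκ0.le hΛ.le hl0.le hbd hcl hp hq' rp rq s1
    (by have := err 1 N (by norm_num) (by norm_num) hN0 (by linarith)
        simpa only [one_mul] using this)
  rw [← hrd] at R1 U1 D1
  obtain ⟨R2, J2, U2, D2⟩ := round_lem (S := δ * N) (b := 5 * (δ * N)) (l := 2 * lam) hη0 hL hκ0.le hΛ.le (by positivity) hbd hcl
    hr hr R1 R1 (by linarith)
    (err 2 _ (by norm_num) (by norm_num) (by linarith) (by linarith))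
  rw [← htd] at R2 U2 D2
  obtain ⟨R3, J3, U3, D3⟩ := round_lem (S := δ * N) (b := 14 * (δ * N)) (l := 4 * lam) hη0 hL hκ0.le hΛ.le
    (by positivity) hbd hcl ht ht
    (a := 12 * (δ * N)) (fun V => by have := R2 V; linarith) (fun V => by have := R2 V; linarith)
    (by linarith)
    (err 4 _ (by norm_num) (by norm_num) (by linarith) (by linarith))
  -- lower bound
  have f3 := fib ht ht
  have j3 := JJ_nonneg ht ht
  have j2 := JJ_nonneg hr hr
  have f4 := fam_le_el hr
  rw [← htd] at f4
  -- upper bound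
  obtain ⟨V, hV1, hV2⟩ := hcl' G (G × G) (G × G) (ew r) (ew r) (el r) (el r) (isP_ew hr) (isP_ew hr)
    (isP_el hr) (isP_el hr)
  have ea : avh (ew r) (el r) = EE r r - 2 * hh t := el_hh hr
  have eaN : avh (ew r) (el r) + avh (ew r) (el r) ≤ 4 * N := by
    rw [ea]
    have h2 : JJ r r = 4 * hh t - EE r r - hh (cv t t) := rfl
    have h3 := hh_le_cv ht ht
    linarith
  have e1 := el_hq hr V
  have e2 := el_bsg hr
  have e3 := R2 V
  rw [← htd] at e1
  have e4 : 4 * lam * dm V ≤ 4 * (lam * Λ') * (4 * N) := by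
    have := mul_le_mul_of_nonneg_left (hV1.trans (mul_le_mul_of_nonneg_left eaN hΛ'.le))
      (by positivity : 0 ≤ 4 * lam)
    linarith
  have e5 : (lam * Λ') * N ≤ δ / 192 * N := mul_le_mul_of_nonneg_right (by linarith) hN0
  have e6 : κ * (avh (ew r) (el r) + avh (ew r) (el r)) ≤ κ * (4 * N) :=
    mul_le_mul_of_nonneg_left eaN hκ0.le
  have e7 : κ * (4 * N) ≤ δ * N := by rw [hκ]; linarith
  have hst : hh (cv t t) = 2 * hh t - ss t t := by unfold ss; ring
  have tlow : N / 2 ≤ hh t := by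
    have a1 := hh_le_cv hp hq'
    have a2 := hh_le_cv' hp hq'
    have a3 := hh_le_cv hr hr
    rw [← hrd] at a1 a2
    rw [← htd] at a3
    linarith
  have up : ∑ u, ∑ w, cv t t u * cv t t w * ss (fam t t u) (fam t t w) ≤ 12814 * (δ * N) := by
    linarith
  have ηst : η * hh (cv t t) = 2 * η * hh t - η * ss t t := by rw [hst]; ring
  have low1 : 4 * η * η * hh t - 95 * (δ * N) ≤
      ∑ u, ∑ w, cv t t u * cv t t w * ss (fam t t u) (fam t t w) := by
    have b1 : η * (2 * η * hh t - 14 * (δ * N)) ≤ η * ss t t :=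
      mul_le_mul_of_nonneg_left (by linarith) hη0
    have b2 : η * (δ * N) ≤ 1 * (δ * N) := mul_le_mul_of_nonneg_right hη1 δN.le
    linarith
  have c1 : η * η * (N / 2) ≤ η * η * hh t := mul_le_mul_of_nonneg_left tlow (by positivity)
  have c2 : 7000 * δ ≤ η * η := by
    have : 7000 * δ = η0 ^ 2 := by rw [hδ]; ring
    rw [this, hη]; nlinarith
  have c3 : 7000 * δ * (N / 2) ≤ η * η * (N / 2) := mul_le_mul_of_nonneg_right c2 (by linarith)
  linarith

lemma bd_half : BdL (1 / 2) 0 := by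
  intro G _ _ _ p q hp hq'
  refine ⟨⊥, by rw [dm_bot]; simp, ?_⟩
  have h1 := ss_le_left hp hq'
  have h2 := ss_le_right hp hq'
  unfold sV
  rw [hq_bot hp, hq_bot hq', hq_bot (isP_cv hp hq')]
  unfold ss at *
  linarith

lemma bd_mono {η η' L : ℝ} (h : η ≤ η') (hb : BdL η L) : BdL η' L := by
  intro G _ _ _ p q hp hq'
  obtain ⟨V, h1, h2⟩ := hb G p q hp hq'
  exact ⟨V, h1, h2.trans (mul_le_mul_of_nonneg_right h
    (add_nonneg (hq_nonneg hp V) (hq_nonneg hq' V)))⟩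

theorem bd_all (ε : ℝ) (hε : 0 < ε) : ∃ L, 0 ≤ L ∧ BdL ε L := by
  set S : Set ℝ := {η | 0 < η ∧ ∃ L, 0 ≤ L ∧ BdL η L} with hS
  have hne : (1 / 2 : ℝ) ∈ S := ⟨by norm_num, 0, le_rfl, bd_half⟩
  have hbb : BddBelow S := ⟨0, fun x hx => hx.1.le⟩
  have h0 : 0 ≤ sInf S := le_csInf ⟨_, hne⟩ fun x hx => hx.1.le
  have hz : sInf S = 0 := by
    by_contra hnz
    have hpos : 0 < sInf S := lt_of_le_of_ne h0 (Ne.symm hnz)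
    have hle : sInf S ≤ 1 / 2 := csInf_le hbb hne
    obtain ⟨x, ⟨hx0, L, hL, hx⟩, hxl⟩ := exists_lt_of_csInf_lt ⟨_, hne⟩
      (show sInf S < sInf S + sInf S ^ 2 / 7000 by
        have : 0 < sInf S ^ 2 / 7000 := by positivity
        linarith)
    obtain ⟨L', hL', hb⟩ := step hpos hle hL (bd_mono hxl.le hx)
    have hmem : sInf S - sInf S ^ 2 / 7000 ∈ S := ⟨by nlinarith, L', hL', hb⟩
    have := csInf_le hbb hmem
    have : 0 < sInf S ^ 2 / 7000 := by positivity
    linarith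
  obtain ⟨x, ⟨hx0, L, hL, hx⟩, hxl⟩ := exists_lt_of_csInf_lt ⟨_, hne⟩ (show sInf S < ε by rw [hz]; exact hε)
  exact ⟨L, hL, bd_mono hxl.le hx⟩

/-- uniform law on a subspace -/
def ulaw (V : Submodule (ZMod 2) G) : G → ℝ :=
  (V : Set G).indicator fun _ => (Nat.card V : ℝ)⁻¹

lemma isP_ulaw (V : Submodule (ZMod 2) G) : IsP (ulaw V) := by
  classical
  refine ⟨fun x => Set.indicator_nonneg (fun _ _ => by positivity) x, ?_⟩
  have hc : (Nat.card V : ℝ) ≠ 0 := by exact_mod_cast (Nat.card_pos (α := V)).ne'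
  simp only [ulaw, Set.indicator_apply, SetLike.mem_coe]
  rw [← Finset.sum_filter, Finset.sum_const, nsmul_eq_mul]
  have : (Finset.univ.filter (fun x => x ∈ V)).card = Nat.card V := by
    rw [Nat.card_eq_fintype_card, Fintype.card_subtype]
  rw [this]
  field_simp

lemma ulaw_inv (V : Submodule (ZMod 2) G) (v : G) (hv : v ∈ V) (s : G) :
    ulaw V (s + v) = ulaw V s := by
  classical
  simp only [ulaw, Set.indicator_apply, SetLike.mem_coe]
  rw [V.add_mem_iff_left hv]

lemma hq_cv_ulaw {p : G → ℝ} (hp : IsP p) (V : Submodule (ZMod 2) G) :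
    hh (cv p (ulaw V)) = hq V (cv p (ulaw V)) + Real.log (Nat.card V) := by
  refine hh_inv (isP_cv hp (isP_ulaw V)) V fun v hv s => ?_
  rw [cv_apply, cv_apply]
  refine Finset.sum_congr rfl fun z _ => ?_
  rw [show s + v - z = (s - z) + v by abel, ulaw_inv V v hv]

lemma hq_ulaw (V : Submodule (ZMod 2) G) : hq V (ulaw V) = 0 := by
  classical
  unfold hq HH
  rw [neg_eq_zero]
  refine Finset.sum_eq_zero fun b _ => ?_
  by_cases hb : b ∈ V
  · have : prb (ulaw V) (fun x => V.mkQ x) b = 1 := by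
      rw [prb, ← (isP_ulaw V).2]
      refine Finset.sum_congr rfl fun d _ => ?_
      by_cases hd : d ∈ V
      · rw [if_pos (mkQ_eq_iff.2 (V.sub_mem hd hb))]
      · have : ulaw V d = 0 := by simp [ulaw, hd]
        rw [this]; exact ite_self 0
    rw [this]; simp
  · have : ulaw V b = 0 := by simp [ulaw, hb]
    rw [this]; simp

lemma hh_ulaw (V : Submodule (ZMod 2) G) : hh (ulaw V) = Real.log (Nat.card V) := by
  have := hh_inv (isP_ulaw V) V (fun v hv s => ulaw_inv V v hv s)
  rw [hq_ulaw, zero_add] at this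
  exact this

lemma hq_cv_ulaw_le {p : G → ℝ} (hp : IsP p) (V : Submodule (ZMod 2) G) :
    hq V (cv p (ulaw V)) ≤ hq V p := by
  have hu := isP_ulaw V
  have h1 := HH_mono (isP_prd hp hu) (f := fun z => (V.mkQ z.1, V.mkQ z.2))
    (g := fun z => V.mkQ (z.1 + z.2)) (fun x y e => by
      simp only [Prod.mk.injEq] at e
      rw [map_add, map_add, e.1, e.2])
  rw [HH_prd_pair hp hu (fun x => V.mkQ x) (fun x => V.mkQ x)] at h1
  have h2 := hq_ulaw V
  rw [hq_cv]
  unfold hq at *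
  linarith

theorem final_core (ε : ℝ) (hε : 0 < ε) : ∃ L : ℝ, 0 < L ∧
    ∀ (G : Type) [AddCommGroup G] [Module (ZMod 2) G] [Fintype G] (p q : G → ℝ), IsP p → IsP q →
      ∃ V : Submodule (ZMod 2) G, hh (ulaw V) ≤ L * (hh p + hh q) ∧
        hh (cv p (ulaw V)) - hh (ulaw V) ≤ hh (cv p q) - hh q + ε * (hh p + hh q) := by
  obtain ⟨L, hL, hb⟩ := bd_all ε hε
  refine ⟨L + 1, by linarith, ?_⟩
  intro G _ _ _ p q hp hq'
  obtain ⟨V, h1, h2⟩ := hb G p q hp hq'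
  have p0 := hh_nonneg hp
  have q0 := hh_nonneg hq'
  refine ⟨V, ?_, ?_⟩
  · rw [hh_ulaw]
    have := log_card_le V
    linarith
  · rw [hh_ulaw, hq_cv_ulaw hp]
    have e1 := hq_cv_ulaw_le hp V
    have e2 := contract0 hq' hp V
    rw [cv_comm q p] at e2
    have e3 : ε * (hq V p + hq V q) ≤ ε * (hh p + hh q) :=
      mul_le_mul_of_nonneg_left (add_le_add (hq_le hp V) (hq_le hq' V)) hε.le
    unfold sV at h2
    linarith
end Main


lemma ent_eq_hh {n : ℕ} (p : Fvec n → ℝ) : ent p = hh p := by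
  rw [ent, finsum_eq_sum_of_fintype, hh_eq]

lemma conv_eq_cv {n : ℕ} (p q : Fvec n → ℝ) : conv p q = cv p q := by
  funext s
  rw [conv, finsum_eq_sum_of_fintype, cv_apply]

lemma isP_of_isDist {n : ℕ} {p : Fvec n → ℝ} (h : IsDist p) : IsP p :=
  ⟨h.1, by rw [← h.2, finsum_eq_sum_of_fintype]⟩

lemma unifOn_eq_ulaw {n : ℕ} (V : Submodule (ZMod 2) (Fvec n)) :
    unifOn (V : Set (Fvec n)) = ulaw V := rfl

/-- For every `ε > 0` there is `L > 0` such that for independent `X, Y` there is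
a subspace `V` with `H[𝐔_V] ≤ L(H[X]+H[Y])` and
`H[X + 𝐔_V] − H[𝐔_V] ≤ H[X+Y] − H[Y] + ε(H[X]+H[Y])`. -/
theorem statement3 :
    ∀ ε : ℝ, 0 < ε → ∃ L : ℝ, 0 < L ∧
      ∀ (n : ℕ) (p q : Fvec n → ℝ), IsDist p → IsDist q →
        ∃ V : Submodule (ZMod 2) (Fvec n),
          ent (unifOn (V : Set (Fvec n))) ≤ L * (ent p + ent q) ∧
          ent (conv p (unifOn (V : Set (Fvec n)))) - ent (unifOn (V : Set (Fvec n))) ≤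
            ent (conv p q) - ent q + ε * (ent p + ent q) := by
  intro ε hε
  obtain ⟨L, hL, h⟩ := final_core ε hε
  refine ⟨L, hL, fun n p q hp hq' => ?_⟩
  obtain ⟨V, h1, h2⟩ := h (Fvec n) p q (isP_of_isDist hp) (isP_of_isDist hq')
  refine ⟨V, ?_, ?_⟩
  · rw [unifOn_eq_ulaw, ent_eq_hh, ent_eq_hh, ent_eq_hh]
    exact h1
  · rw [unifOn_eq_ulaw, conv_eq_cv, conv_eq_cv]
    simp only [ent_eq_hh]
    exact h2
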